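/- For every t-uniform hypergraph H (t ≥ 2) with at least t+1 vertices and at least one edge, and every positive real δ, there exists a positive constant C such that the following holds for every n ∈ ℕ: if m ≥ C·n^{t − 1/m_t(H)}, then binom(ex(n,H), m) ≤ f_{n,m}(H) ≤ binom(ex(n,H) + ⌈δ·n^t⌉, m), where f_{n,m}(H) denotes the number of H-free t-uniform hypergraphs on the vertex set {1,…,n} with exactly m edges. -/

import Mathlib

attribute [local instance] Classical.propDecidable

/-- The `t`-uniform hypergraph `G` contains a copy of the `t`-uniform hypergraph `H`. -/
def HContains {α β : Type*} (H : Finset (Finset α)) (G : Finset (Finset β)) : Prop :=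
  ∃ f : α → β, Function.Injective f ∧ ∀ E ∈ H, E.image f ∈ G

/-- The `t`-density `m_t(H)` of a `t`-uniform hypergraph `H`: the maximum of
`(e(H') - 1)/(v(H') - t)` over all subhypergraphs `H' ⊆ H` with at least `t + 1` vertices. -/
noncomputable def tDensity {α : Type*} [Fintype α] (t : ℕ) (H : Finset (Finset α)) : ℝ :=
  sSup {x : ℝ | ∃ s : Finset α, t + 1 ≤ s.card ∧
    x = (((H.filter fun E => E ⊆ s).card : ℝ) - 1) / ((s.card : ℝ) - (t : ℝ))}

/-- The Turán number `ex(n, H)`: the maximum number of edges of an `H`-free `t`-uniform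
hypergraph on `n` vertices. -/
noncomputable def exTuran {α : Type*} (t n : ℕ) (H : Finset (Finset α)) : ℕ :=
  sSup {m : ℕ | ∃ G : Finset (Finset (Fin n)),
    (∀ E ∈ G, E.card = t) ∧ ¬ HContains H G ∧ G.card = m}


namespace HC

/-- A consistent container scheme for the family of sets satisfying `Ind`. -/
def HasScheme {V : Type} (a : ℕ) (b : ℝ) (Ind : Finset V → Prop) : Prop :=
  ∃ T C : Finset V → Finset V, (∀ I, T I ⊆ I) ∧
    (∀ I J, T I ⊆ J → J ⊆ I → T J = T I ∧ C J = C I) ∧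
    (∀ I, (T I).card ≤ a) ∧ (∀ I, Ind I → I ⊆ C I) ∧ ∀ I, ((C I).card : ℝ) ≤ b

theorem HasScheme.mono {V : Type} {a a' : ℕ} {b b' : ℝ} {P Q : Finset V → Prop}
    (h : HasScheme a b P) (ha : a ≤ a') (hb : b ≤ b') (hQ : ∀ I, Q I → P I) :
    HasScheme a' b' Q := by
  obtain ⟨T, C, h1, h2, h3, h4, h5⟩ := h
  exact ⟨T, C, h1, h2, fun I => (h3 I).trans ha, fun I hI => h4 I (hQ I hI),
    fun I => (h5 I).trans hb⟩

theorem HasScheme.const {V : Type} {b : ℝ} {P : Finset V → Prop} (C : Finset V)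
    (hC : ∀ I, P I → I ⊆ C) (hb : (C.card : ℝ) ≤ b) : HasScheme 0 b P :=
  ⟨fun _ => ∅, fun _ => C, by simp, by simp, by simp, hC, fun _ => hb⟩

theorem exists_pick (V : Type) [Fintype V] [Nonempty V] :
    ∃ pick : Finset V → V, (∀ X : Finset V, X.Nonempty → pick X ∈ X) ∧
      ∀ X Y : Finset V, X.Nonempty → pick X ∈ Y → Y ⊆ X → pick Y = pick X := by
  let e := Fintype.equivFin V
  have h : ∀ X : Finset V, ∃ v, X.Nonempty → v ∈ X ∧ ∀ u ∈ X, e v ≤ e u := by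
    intro X
    by_cases hX : X.Nonempty
    · obtain ⟨v, hv, hm⟩ := Finset.exists_min_image X e hX
      exact ⟨v, fun _ => ⟨hv, hm⟩⟩
    · exact ⟨Classical.arbitrary V, fun h => absurd h hX⟩
  choose pick hpick using h
  refine ⟨pick, fun X hX => (hpick X hX).1, fun X Y hX hY hYX => ?_⟩
  have hYn : Y.Nonempty := ⟨_, hY⟩
  apply e.injective
  apply le_antisymm
  · exact (hpick Y hYn).2 _ hY
  · exact (hpick X hX).2 _ (hYX (hpick Y hYn).1)

theorem HasScheme.branch {V : Type} [Fintype V] {a : ℕ} {b : ℝ} {P : Finset V → Prop}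
    (X : Finset V) (h0 : HasScheme a b (fun I => P I ∧ Disjoint I X))
    (h1 : ∀ v ∈ X, HasScheme a b (fun I => P I ∧ v ∈ I)) : HasScheme (a + 1) b P := by
  by_cases hX : X.Nonempty
  swap
  · rw [Finset.not_nonempty_iff_eq_empty] at hX
    subst hX
    exact h0.mono (by omega) le_rfl (by simp)
  have : Nonempty V := ⟨hX.choose⟩
  obtain ⟨pick, hp1, hp2⟩ := exists_pick V
  have h1' : ∀ v, HasScheme a b (fun I => (P I ∧ v ∈ I) ∧ v ∈ X) := by
    intro v
    by_cases hv : v ∈ X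
    · exact (h1 v hv).mono le_rfl le_rfl (fun I h => h.1)
    · exact h0.mono le_rfl le_rfl (by tauto)
  choose T1 C1 a1 a2 a3 a4 a5 using h1'
  obtain ⟨T0, C0, b1, b2, b3, b4, b5⟩ := h0
  refine ⟨fun I => if (I ∩ X).Nonempty then insert (pick (I ∩ X)) (T1 (pick (I ∩ X)) I) else T0 I,
    fun I => if (I ∩ X).Nonempty then C1 (pick (I ∩ X)) I else C0 I, ?_, ?_, ?_, ?_, ?_⟩
  · intro I
    by_cases h : (I ∩ X).Nonempty
    · simp only [h, if_true]
      exact Finset.insert_subset (Finset.mem_inter.1 (hp1 _ h)).1 (a1 _ _)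
    · simp only [h, if_false]; exact b1 I
  · intro I J hTJ hJI
    by_cases h : (I ∩ X).Nonempty
    · simp only [h, if_true] at hTJ ⊢
      have hm := hp1 _ h
      have hvJ : pick (I ∩ X) ∈ J := hTJ (Finset.mem_insert_self _ _)
      have hvJX : pick (I ∩ X) ∈ J ∩ X := Finset.mem_inter.2 ⟨hvJ, (Finset.mem_inter.1 hm).2⟩
      have hJ : (J ∩ X).Nonempty := ⟨_, hvJX⟩
      have hpe := hp2 _ _ h hvJX (Finset.inter_subset_inter_right hJI)
      simp only [hJ, if_true, hpe]
      have := a2 (pick (I ∩ X)) I J ((Finset.subset_insert _ _).trans hTJ) hJI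
      rw [this.1, this.2]; exact ⟨rfl, rfl⟩
    · have hJ : ¬ (J ∩ X).Nonempty := fun hJ => h (hJ.mono (Finset.inter_subset_inter_right hJI))
      simp only [h, hJ, if_false] at hTJ ⊢
      exact b2 I J hTJ hJI
  · intro I
    dsimp only
    split_ifs with h
    · exact (Finset.card_insert_le _ _).trans (by have := a3 (pick (I ∩ X)) I; omega)
    · exact (b3 I).trans (by omega)
  · intro I hI
    dsimp only
    split_ifs with h
    · have hm := Finset.mem_inter.1 (hp1 _ h)
      exact a4 _ _ ⟨⟨hI, hm.1⟩, hm.2⟩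
    · apply b4 _ ⟨hI, _⟩
      rw [Finset.disjoint_iff_inter_eq_empty]
      exact Finset.not_nonempty_iff_eq_empty.1 h
  · intro I
    dsimp only
    split_ifs with h
    · exact a5 _ _
    · exact b5 I

theorem HasScheme.iterate {V : Type} {a a' : ℕ} {b b' : ℝ} {P : Finset V → Prop}
    (h0 : HasScheme a b P)
    (h1 : ∀ C : Finset V, (C.card : ℝ) ≤ b → HasScheme a' b' (fun I => P I ∧ I ⊆ C)) :
    HasScheme (a + a') b' P := by
  obtain ⟨T0, C0, b1, b2, b3, b4, b5⟩ := h0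
  have h1' : ∀ J : Finset V, HasScheme a' b' (fun I => P I ∧ I ⊆ C0 J) :=
    fun J => h1 (C0 J) (b5 J)
  have h1'' : ∀ C : Finset V, ∃ T C' : Finset V → Finset V, (∃ J, C = C0 J) → (∀ I, T I ⊆ I) ∧
    (∀ I J, T I ⊆ J → J ⊆ I → T J = T I ∧ C' J = C' I) ∧
    (∀ I, (T I).card ≤ a') ∧ (∀ I, (P I ∧ I ⊆ C) → I ⊆ C' I) ∧ ∀ I, ((C' I).card : ℝ) ≤ b' := by
    intro C
    by_cases hC : ∃ J, C = C0 J
    · obtain ⟨J, rfl⟩ := hC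
      obtain ⟨T, C', h⟩ := h1' J
      exact ⟨T, C', fun _ => h⟩
    · exact ⟨id, id, fun h => absurd h hC⟩
  choose T1 C1 hTC using h1''
  have key := fun I => hTC (C0 I) ⟨I, rfl⟩
  refine ⟨fun I => T0 I ∪ T1 (C0 I) I, fun I => C1 (C0 I) I, ?_, ?_, ?_, ?_, ?_⟩
  · intro I
    exact Finset.union_subset (b1 I) ((key I).1 I)
  · intro I J hT hJ
    obtain ⟨e1, e2⟩ := b2 I J (Finset.subset_union_left.trans hT) hJ
    obtain ⟨f1, f2⟩ := (key I).2.1 I J (Finset.subset_union_right.trans hT) hJ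
    simp only [e1, e2, f1, f2, and_self]
  · intro I
    exact (Finset.card_union_le _ _).trans (add_le_add (b3 I) ((key I).2.2.1 I))
  · intro I hI
    exact (key I).2.2.2.1 I ⟨hI, b4 I hI⟩
  · intro I
    exact (key I).2.2.2.2 I

/-- Degree of a set in a weighted hypergraph. -/
noncomputable def deg {V : Type} [Fintype V] (w : Finset V → ℝ) (S : Finset V) : ℝ :=
  ∑ e ∈ (Finset.univ : Finset (Finset V)).filter (fun e => S ⊆ e), w e

def Indep {V : Type} (w : Finset V → ℝ) (I : Finset V) : Prop := ∀ e, 0 < w e → ¬ e ⊆ I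

structure Hyp {V : Type} [Fintype V] (A : Finset V) (N p : ℝ) (k : ℕ) (K : ℝ)
    (w : Finset V → ℝ) : Prop where
  nonneg : ∀ e, 0 ≤ w e
  supp : ∀ e, w e ≠ 0 → e ⊆ A ∧ e.card = k
  deg_le : ∀ S : Finset V, S.Nonempty → deg w S * p ≤ K * p ^ S.card
  tot : N ≤ ∑ e, w e

theorem deg_empty {V : Type} [Fintype V] (w : Finset V → ℝ) : deg w ∅ = ∑ e, w e := by
  simp [deg]

theorem deg_nonneg {V : Type} [Fintype V] {w : Finset V → ℝ} (h : ∀ e, 0 ≤ w e) (S : Finset V) :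
    0 ≤ deg w S := Finset.sum_nonneg fun e _ => h e

theorem deg_mono {V : Type} [Fintype V] {u w : Finset V → ℝ} (h : ∀ e, u e ≤ w e) (S : Finset V) :
    deg u S ≤ deg w S := Finset.sum_le_sum fun e _ => h e

theorem deg_eq_ite {V : Type} [Fintype V] (w : Finset V → ℝ) (S : Finset V) :
    deg w S = ∑ e, if S ⊆ e then w e else 0 := by
  rw [deg, Finset.sum_filter]

theorem sum_deg_singleton {V : Type} [Fintype V] (A : Finset V) (k : ℕ) (w : Finset V → ℝ)
    (hs : ∀ e, w e ≠ 0 → e ⊆ A ∧ e.card = k) :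
    ∑ v ∈ A, deg w {v} = k * ∑ e, w e := by
  simp only [deg_eq_ite]
  rw [Finset.sum_comm, Finset.mul_sum]
  refine Finset.sum_congr rfl fun e _ => ?_
  by_cases h : w e = 0
  · simp [h]
  · obtain ⟨h1, h2⟩ := hs e h
    simp only [Finset.singleton_subset_iff]
    rw [← Finset.sum_filter, Finset.sum_const, nsmul_eq_mul]
    congr 2
    rw [← h2]
    congr 1
    ext v
    simp only [Finset.mem_filter]
    exact ⟨fun h => h.2, fun h => ⟨h1 h, h⟩⟩

theorem sum_deg_all {V : Type} [Fintype V] (k : ℕ) (w : Finset V → ℝ)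
    (hs : ∀ e, w e ≠ 0 → e.card = k) :
    ∑ S, deg w S = 2 ^ k * ∑ e, w e := by
  simp only [deg_eq_ite]
  rw [Finset.sum_comm, Finset.mul_sum]
  refine Finset.sum_congr rfl fun e _ => ?_
  by_cases h : w e = 0
  · simp [h]
  · have h2 := hs e h
    rw [← Finset.sum_filter, Finset.sum_const, nsmul_eq_mul]
    congr 1
    have : (Finset.univ.filter fun S : Finset V => S ⊆ e) = e.powerset := by
      ext v; simp
    rw [this, Finset.card_powerset, h2]; simp

theorem deg_link {V : Type} [Fintype V] (u : Finset V → ℝ) (v : V) (S : Finset V) (hv : v ∉ S) :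
    deg (fun f => if v ∈ f then 0 else u (insert v f)) S = deg u (insert v S) := by
  unfold deg
  rw [← Finset.sum_filter_of_ne (p := fun f => v ∉ f)]
  swap
  · intro f _ h hvf; simp [hvf] at h
  refine Finset.sum_bij' (fun f _ => insert v f) (fun e _ => e.erase v) ?_ ?_ ?_ ?_ ?_
  · intro f hf
    simp only [Finset.mem_filter, Finset.mem_univ, true_and] at hf ⊢
    exact Finset.insert_subset_insert _ hf.1
  · intro f hf
    simp only [Finset.mem_filter, Finset.mem_univ, true_and] at hf ⊢
    refine ⟨fun x hx => Finset.mem_erase.2 ⟨fun h => hv (h ▸ hx), hf (Finset.mem_insert_of_mem hx)⟩,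
      by simp⟩
  · intro f hf
    simp only [Finset.mem_filter, Finset.mem_univ, true_and] at hf ⊢
    exact Finset.erase_insert hf.2
  · intro f hf
    simp only [Finset.mem_filter, Finset.mem_univ, true_and] at hf ⊢
    exact Finset.insert_erase (hf (Finset.mem_insert_self _ _))
  · intro f hf
    simp only [Finset.mem_filter, Finset.mem_univ, true_and] at hf ⊢
    simp [hf.2]

theorem deg_link' {V : Type} [Fintype V] (u : Finset V → ℝ) (v : V) (S : Finset V) (hv : v ∈ S) :
    deg (fun f => if v ∈ f then 0 else u (insert v f)) S = 0 := by
  unfold deg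
  refine Finset.sum_eq_zero fun f hf => ?_
  have := (Finset.mem_filter.1 hf).2 hv
  simp [this]

theorem deg_add {V : Type} [Fintype V] (u w : Finset V → ℝ) (S : Finset V) :
    deg (fun f => u f + w f) S = deg u S + deg w S := by
  unfold deg; rw [Finset.sum_add_distrib]

/-- The light vertices form a small set. -/
theorem light_card {V : Type} [Fintype V] (A : Finset V) (k : ℕ) (hk : 1 ≤ k) (u : Finset V → ℝ)
    (h0 : ∀ e, 0 ≤ u e) (hs : ∀ e, u e ≠ 0 → e ⊆ A ∧ e.card = k) (K β N c : ℝ) (hβ : 0 ≤ β)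
    (hK : 0 < K) (hd : ∀ v, deg u {v} ≤ K) (hA : (A.card : ℝ) ≤ N) (hc : c ≤ ∑ e, u e) :
    ((A.filter fun v => deg u {v} < β).card : ℝ) ≤ A.card - (c - β * N) / K := by
  have h1 := sum_deg_singleton A k u hs
  have h2 : ∑ e, u e ≤ k * ∑ e, u e := by
    have : 0 ≤ ∑ e, u e := Finset.sum_nonneg fun e _ => h0 e
    have hk' : (1 : ℝ) ≤ k := by exact_mod_cast hk
    nlinarith
  rw [← Finset.sum_filter_add_sum_filter_not A (fun v => deg u {v} < β)] at h1
  have h3 : ∑ v ∈ A.filter (fun v => deg u {v} < β), deg u {v} ≤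
      (A.filter (fun v => deg u {v} < β)).card * β := by
    rw [← nsmul_eq_mul]
    exact Finset.sum_le_card_nsmul _ _ _ fun v hv => (Finset.mem_filter.1 hv).2.le
  have h4 : ∑ v ∈ A.filter (fun v => ¬ deg u {v} < β), deg u {v} ≤
      (A.filter (fun v => ¬ deg u {v} < β)).card * K := by
    rw [← nsmul_eq_mul]
    exact Finset.sum_le_card_nsmul _ _ _ fun v hv => hd v
  have h5 : ((A.filter (fun v => deg u {v} < β)).card : ℝ) +
      (A.filter (fun v => ¬ deg u {v} < β)).card = A.card := by
    exact_mod_cast Finset.card_filter_add_card_filter_not (s := A) (fun v => deg u {v} < β)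
  have h6 : ((A.filter (fun v => deg u {v} < β)).card : ℝ) ≤ A.card := by
    exact_mod_cast Finset.card_filter_le _ _
  have h7 : (c - β * N) / K ≤ (A.filter (fun v => ¬ deg u {v} < β)).card := by
    rw [div_le_iff₀ hK]
    nlinarith
  linarith

structure Inv {V : Type} [Fintype V] (p K K' : ℝ) (w u g : Finset V → ℝ) (T : Finset V) :
    Prop where
  u_cases : ∀ e, u e = w e ∨ u e = 0
  lost : ∀ e, u e = w e ∨ (∃ v ∈ T, v ∈ e) ∨
    ∃ S : Finset V, S ⊆ e ∧ S.Nonempty ∧ K' * p ^ S.card ≤ deg g S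
  g_nonneg : ∀ f, 0 ≤ g f
  g_supp : ∀ f, g f ≠ 0 → ∃ v ∈ T, v ∉ f ∧ 0 < w (insert v f)
  sat : ∀ S : Finset V, S.Nonempty → K' * p ^ S.card ≤ deg g S → ∀ e, S ⊆ e → u e = 0
  deg_le : ∀ S : Finset V, S.Nonempty → deg g S ≤ (K' + K) * p ^ S.card
  taken : ∀ v ∈ T, ∀ e, v ∈ e → u e = 0
  tot_le : ∑ f, g f ≤ T.card * K
  tot_ge : (T.card : ℝ) * (1 / 4) ≤ ∑ f, g f

theorem Inv.init {V : Type} [Fintype V] {p K K' : ℝ} (hp : 0 < p) (hK : 0 < K) (hK' : 0 < K')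
    (w : Finset V → ℝ) : Inv p K K' w w (fun _ => 0) ∅ where
  u_cases := by simp
  lost := by simp
  g_nonneg := by simp
  g_supp := by simp
  sat := by
    intro S _ h
    have : 0 < K' * p ^ S.card := by positivity
    simp [deg] at h
    linarith
  deg_le := by
    intro S _
    have : 0 < (K' + K) * p ^ S.card := by positivity
    simp only [deg, Finset.sum_const_zero]
    linarith
  taken := by simp
  tot_le := by simp
  tot_ge := by simp

theorem Inv.u_nonneg {V : Type} [Fintype V] {p K K' : ℝ} {w u g : Finset V → ℝ} {T : Finset V}
    (h : Inv p K K' w u g T) (hw : ∀ e, 0 ≤ w e) (e : Finset V) : 0 ≤ u e := by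
  rcases h.u_cases e with h | h <;> rw [h]
  exact hw e

theorem Inv.u_le {V : Type} [Fintype V] {p K K' : ℝ} {w u g : Finset V → ℝ} {T : Finset V}
    (h : Inv p K K' w u g T) (hw : ∀ e, 0 ≤ w e) (e : Finset V) : u e ≤ w e := by
  rcases h.u_cases e with h | h <;> rw [h]
  exact hw e

theorem Hyp.deg_one {V : Type} [Fintype V] {A : Finset V} {N p K : ℝ} {k : ℕ} {w : Finset V → ℝ}
    (h : Hyp A N p k K w) (hp : 0 < p) (v : V) : deg w {v} ≤ K := by
  have := h.deg_le {v} (by simp)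
  simp only [Finset.card_singleton, pow_one] at this
  exact le_of_mul_le_mul_right this hp

theorem Inv.step {V : Type} [Fintype V] {A : Finset V} {N p K K' : ℝ} {k : ℕ}
    {w u g : Finset V → ℝ} {T : Finset V} (hp : 0 < p) (hK : 0 < K) (hK' : 0 < K')
    (hw : Hyp A N p k K w) (h : Inv p K K' w u g T) (v : V) (hv : 1 / 4 ≤ deg u {v}) :
    ∃ u' g', Inv p K K' w u' g' (insert v T) ∧ v ∉ T := by
  have hu0 := h.u_nonneg hw.nonneg
  have hul := h.u_le hw.nonneg
  have hvT : v ∉ T := by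
    intro hvT
    have : deg u {v} = 0 := by
      refine Finset.sum_eq_zero fun e he => h.taken v hvT e ?_
      simpa using he
    linarith
  set l : Finset V → ℝ := fun f => if v ∈ f then 0 else u (insert v f) with hl
  have hl0 : ∀ f, 0 ≤ l f := by
    intro f; simp only [hl]; split_ifs
    · exact le_rfl
    · exact hu0 _
  set g' : Finset V → ℝ := fun f => g f + l f with hg'
  have hdeg : ∀ S, deg g' S = deg g S + deg l S := fun S => deg_add g l S
  have hdegmono : ∀ S, deg g S ≤ deg g' S := fun S => by
    rw [hdeg]; linarith [deg_nonneg hl0 S]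
  set bad : Finset V → Prop := fun e => v ∈ e ∨
    ∃ S : Finset V, S ⊆ e ∧ S.Nonempty ∧ K' * p ^ S.card ≤ deg g' S with hbad
  have htot : ∑ f, g' f = ∑ f, g f + deg u {v} := by
    rw [← deg_empty, hdeg, deg_empty, hl, deg_link u v ∅ (by simp)]; simp
  refine ⟨fun e => if bad e then 0 else u e, g', ?_, hvT⟩
  have hcard : ((insert v T).card : ℝ) = T.card + 1 := by
    rw [Finset.card_insert_of_notMem hvT]; push_cast; ring
  constructor
  · intro e
    split_ifs
    · exact Or.inr rfl
    · exact h.u_cases e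
  · intro e
    by_cases hb : bad e
    · right
      rcases hb with hb | hb
      · exact Or.inl ⟨v, Finset.mem_insert_self _ _, hb⟩
      · exact Or.inr hb
    · rw [if_neg hb]
      rcases h.lost e with h1 | ⟨x, h1, h2⟩ | ⟨S, h1, h2, h3⟩
      · exact Or.inl h1
      · exact Or.inr (Or.inl ⟨x, Finset.mem_insert_of_mem h1, h2⟩)
      · exact Or.inr (Or.inr ⟨S, h1, h2, h3.trans (hdegmono S)⟩)
  · intro f
    exact add_nonneg (h.g_nonneg f) (hl0 f)
  · intro f hf
    by_cases hgf : g f = 0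
    · have hlf : l f ≠ 0 := by
        intro h'; apply hf; simp [hg', hgf, h']
      have hvf : v ∉ f := by
        intro h'; apply hlf; simp [hl, h']
      refine ⟨v, Finset.mem_insert_self _ _, hvf, ?_⟩
      simp only [hl, hvf, if_false] at hlf
      exact lt_of_lt_of_le (lt_of_le_of_ne (hu0 _) (Ne.symm hlf)) (hul _)
    · obtain ⟨x, h1, h2⟩ := h.g_supp f hgf
      exact ⟨x, Finset.mem_insert_of_mem h1, h2⟩
  · intro S hS hs e hSe
    exact if_pos (Or.inr ⟨S, hSe, hS, hs⟩)
  · intro S hS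
    rw [hdeg]
    by_cases hs : K' * p ^ S.card ≤ deg g S
    · have : deg l S = 0 := by
        refine Finset.sum_eq_zero fun f hf => ?_
        have hSf := (Finset.mem_filter.1 hf).2
        simp only [hl]
        split_ifs
        · rfl
        · exact h.sat S hS hs _ (hSf.trans (Finset.subset_insert _ _))
      rw [this, add_zero]
      exact h.deg_le S hS
    · push Not at hs
      have : deg l S ≤ K * p ^ S.card := by
        by_cases hvS : v ∈ S
        · rw [hl, deg_link' u v S hvS]; positivity
        · rw [hl, deg_link u v S hvS]
          have h1 := hw.deg_le (insert v S) (Finset.insert_nonempty _ _)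
          rw [Finset.card_insert_of_notMem hvS, pow_succ, ← mul_assoc] at h1
          exact (deg_mono hul _).trans (le_of_mul_le_mul_right h1 hp)
      linarith
  · intro x hx e hxe
    split_ifs with hb
    · rfl
    · rcases Finset.mem_insert.1 hx with rfl | hx
      · exact absurd (Or.inl hxe) hb
      · exact h.taken x hx e hxe
  · rw [htot, hcard]
    have := h.tot_le
    have := (deg_mono hul {v}).trans (hw.deg_one hp v)
    linarith
  · rw [htot, hcard]
    have := h.tot_ge
    linarith

theorem Inv.rem {V : Type} [Fintype V] {A : Finset V} {N p K K' : ℝ} {k : ℕ}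
    {w u g : Finset V → ℝ} {T : Finset V} (hp : 0 < p) (hK : 0 < K)
    (hK' : K' = 2 ^ (k + 3) * K ^ 2) (hN : 0 < N)
    (hpK : p ≤ 1 / (8 * K)) (hw : Hyp A N p (k + 1) K w) (h : Inv p K K' w u g T)
    (hT : (T.card : ℝ) ≤ 2 * (p * N)) : N / 2 ≤ ∑ e, u e := by
  have hK'0 : 0 < K' := by rw [hK']; positivity
  let Z : Finset (Finset V) := Finset.univ.filter fun S => S.Nonempty ∧ K' * p ^ S.card ≤ deg g S
  have h1 : ∀ e, w e ≤ u e + (∑ v ∈ T, (if {v} ⊆ e then w e else 0) +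
      ∑ S ∈ Z, if S ⊆ e then w e else 0) := by
    intro e
    have hwe := hw.nonneg e
    have n1 : ∀ v ∈ T, 0 ≤ (if {v} ⊆ e then w e else 0) := by
      intro v _; split_ifs <;> simp [hwe]
    have n2 : ∀ S ∈ Z, 0 ≤ (if S ⊆ e then w e else 0) := by
      intro v _; split_ifs <;> simp [hwe]
    have m1 := Finset.sum_nonneg n1
    have m2 := Finset.sum_nonneg n2
    have hu := h.u_nonneg hw.nonneg e
    rcases h.lost e with h1 | ⟨x, h1, h2⟩ | ⟨S, h1, h2, h3⟩
    · linarith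
    · have := Finset.single_le_sum n1 h1
      rw [if_pos (by simpa using h2)] at this
      linarith
    · have := Finset.single_le_sum n2 (show S ∈ Z by simp [Z, h2, h3])
      rw [if_pos h1] at this
      linarith
  have h2 : ∑ e, w e ≤ ∑ e, u e + (∑ v ∈ T, deg w {v} + ∑ S ∈ Z, deg w S) := by
    refine (Finset.sum_le_sum fun e _ => h1 e).trans ?_
    simp only [deg_eq_ite]
    rw [Finset.sum_add_distrib, Finset.sum_add_distrib, Finset.sum_comm,
      Finset.sum_comm (s := Finset.univ) (t := Z)]
  have h3 : ∑ v ∈ T, deg w {v} ≤ T.card * K := by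
    rw [← nsmul_eq_mul]
    exact Finset.sum_le_card_nsmul _ _ _ fun v _ => hw.deg_one hp v
  have h4 : ∑ S ∈ Z, deg w S ≤ ∑ S ∈ Z, K / (K' * p) * deg g S := by
    refine Finset.sum_le_sum fun S hS => ?_
    obtain ⟨hS1, hS2⟩ := (Finset.mem_filter.1 hS).2
    have := hw.deg_le S hS1
    rw [div_mul_eq_mul_div, le_div_iff₀ (by positivity)]
    calc deg w S * (K' * p) = K' * (deg w S * p) := by ring
      _ ≤ K' * (K * p ^ S.card) := by gcongr
      _ = K * (K' * p ^ S.card) := by ring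
      _ ≤ K * deg g S := by gcongr
  have h5 : ∑ S ∈ Z, K / (K' * p) * deg g S ≤ K / (K' * p) * (2 ^ k * ∑ f, g f) := by
    rw [← Finset.mul_sum, ← sum_deg_all k g]
    · refine mul_le_mul_of_nonneg_left ?_ (by positivity)
      exact Finset.sum_le_sum_of_subset_of_nonneg (Finset.subset_univ _)
        fun S _ _ => deg_nonneg h.g_nonneg S
    · intro f hf
      obtain ⟨v, _, hvf, hwf⟩ := h.g_supp f hf
      have := (hw.supp _ hwf.ne').2
      rw [Finset.card_insert_of_notMem hvf] at this
      omega
  have h6 : K / (K' * p) * (2 ^ k * ∑ f, g f) ≤ K / (K' * p) * (2 ^ k * (2 * (p * N) * K)) := by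
    have := h.tot_le
    have : (T.card : ℝ) * K ≤ 2 * (p * N) * K := by gcongr
    gcongr
    linarith
  have h7 : K / (K' * p) * (2 ^ k * (2 * (p * N) * K)) = N / 4 := by
    rw [hK', pow_add]; field_simp; norm_num
  have h8 : (T.card : ℝ) * K ≤ N / 4 := by
    calc (T.card : ℝ) * K ≤ 2 * (p * N) * K := by gcongr
      _ ≤ 2 * (1 / (8 * K) * N) * K := by gcongr
      _ = N / 4 := by field_simp; norm_num
  have := hw.tot
  linarith

theorem one_step (k : ℕ) : ∀ K : ℝ, 0 < K → ∃ δ : ℝ, 0 < δ ∧ ∃ D : ℕ, ∃ p0 : ℝ, 0 < p0 ∧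
    ∀ (V : Type) [Fintype V] (A : Finset V) (N p : ℝ) (w : Finset V → ℝ),
      0 < p → p ≤ p0 → 1 ≤ p * N → (A.card : ℝ) ≤ N → Hyp A N p (k + 1) K w →
      HasScheme (D * ⌈p * N⌉₊) (A.card - δ * N) (fun I => Indep w I ∧ I ⊆ A) := by
  induction k with
  | zero =>
    intro K hK
    refine ⟨1 / (2 * K), by positivity, 0, 1, one_pos, ?_⟩
    intro V _ A N p w hp hp0 hpN hA hw
    rw [zero_mul]
    refine HasScheme.const (A.filter fun v => deg w {v} < 1 / 2) ?_ ?_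
    · rintro I ⟨hI, hIA⟩ v hv
      refine Finset.mem_filter.2 ⟨hIA hv, ?_⟩
      have : deg w {v} = 0 := by
        refine Finset.sum_eq_zero fun e he => ?_
        by_contra hne
        have hc := (hw.supp e hne).2
        obtain ⟨x, rfl⟩ := Finset.card_eq_one.1 hc
        have hx : v = x := by simpa using he
        subst hx
        exact hI _ (lt_of_le_of_ne (hw.nonneg _) (Ne.symm hne)) (by simpa using hv)
      rw [this]; norm_num
    · have := light_card A 1 le_rfl w hw.nonneg hw.supp K (1 / 2) N N (by norm_num) hK
        (hw.deg_one hp) hA hw.tot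
      refine this.trans (le_of_eq ?_)
      field_simp; ring
  | succ k ih =>
    intro K hK
    obtain ⟨K', hK'⟩ : ∃ K' : ℝ, K' = 2 ^ (k + 1 + 3) * K ^ 2 := ⟨_, rfl⟩
    have hK'0 : 0 < K' := by rw [hK']; positivity
    obtain ⟨δ1, hδ1, D1, p1, hp1, ih⟩ := ih (4 * (K' + K)) (by positivity)
    refine ⟨min δ1 (1 / (4 * K)), by positivity, D1 + 1, min p1 (1 / (8 * K)), by positivity, ?_⟩
    intro V _ A N p w hp hp0 hpN hA hw
    have hN : 0 < N := by
      by_contra h; push Not at h; nlinarith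
    obtain ⟨q, hq⟩ : ∃ q, q = ⌈p * N⌉₊ := ⟨_, rfl⟩
    have hq1 : p * N ≤ q := by rw [hq]; exact Nat.le_ceil _
    have hq2 : (q : ℝ) ≤ 2 * (p * N) := by
      have := Nat.ceil_lt_add_one (show 0 ≤ p * N by positivity)
      rw [← hq] at this; linarith
    have main : ∀ r : ℕ, ∀ u g : Finset V → ℝ, ∀ T : Finset V, Inv p K K' w u g T → T.card + r = q →
        HasScheme (D1 * q + r) (A.card - min δ1 (1 / (4 * K)) * N)
          (fun I => (Indep w I ∧ I ⊆ A) ∧ T ⊆ I) := by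
      intro r
      induction r with
      | zero =>
        intro u g T h hT
        rw [add_zero] at hT ⊢
        have key : Hyp A N p (k + 1) (4 * (K' + K)) (fun f => 4 / p * g f) := by
          constructor
          · intro e; have := h.g_nonneg e; positivity
          · intro f hf
            have hgf : g f ≠ 0 := by intro h'; simp [h'] at hf
            obtain ⟨v, _, hvf, hwf⟩ := h.g_supp f hgf
            obtain ⟨s1, s2⟩ := hw.supp _ hwf.ne'
            refine ⟨(Finset.subset_insert _ _).trans s1, ?_⟩
            rw [Finset.card_insert_of_notMem hvf] at s2
            omega
          · intro S hS
            have h1 := h.deg_le S hS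
            have h2 : deg (fun f => 4 / p * g f) S = 4 / p * deg g S := by
              unfold deg; rw [Finset.mul_sum]
            rw [h2]
            calc 4 / p * deg g S * p = 4 * deg g S := by field_simp
              _ ≤ 4 * ((K' + K) * p ^ S.card) := by gcongr
              _ = _ := by ring
          · rw [← Finset.mul_sum]
            have h1 := h.tot_ge
            rw [hT] at h1
            rw [div_mul_eq_mul_div, le_div_iff₀ hp]
            linarith
        have := ih V A N p _ hp (hp0.trans (min_le_left _ _)) hpN hA key
        refine this.mono (by rw [hq]) ?_ ?_
        · have : min δ1 (1 / (4 * K)) * N ≤ δ1 * N := by gcongr; exact min_le_left _ _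
          linarith
        · rintro I ⟨⟨hI, hIA⟩, hTI⟩
          refine ⟨fun f hf hfI => ?_, hIA⟩
          have hgf : g f ≠ 0 := by intro h'; simp [h'] at hf
          obtain ⟨v, hvT, hvf, hwf⟩ := h.g_supp f hgf
          exact hI _ hwf (Finset.insert_subset (hTI hvT) hfI)
      | succ r ihr =>
        intro u g T h hT
        rw [← add_assoc]
        refine HasScheme.branch (Finset.univ.filter fun v => 1 / 4 ≤ deg u {v}) ?_ ?_
        · refine (HasScheme.const (b := A.card - min δ1 (1 / (4 * K)) * N)
            (A.filter fun v => deg u {v} < 1 / 4) ?_ ?_).mono (Nat.zero_le _) le_rfl (fun _ h => h)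
          · rintro I ⟨⟨⟨hI, hIA⟩, hTI⟩, hdis⟩ v hv
            refine Finset.mem_filter.2 ⟨hIA hv, ?_⟩
            by_contra hc
            push Not at hc
            exact Finset.disjoint_left.1 hdis hv (by simpa using hc)
          · have hrem := h.rem hp hK hK' hN (hp0.trans (min_le_right _ _)) hw (by
              refine le_trans ?_ hq2
              exact_mod_cast (by omega : T.card ≤ q))
            have hs : ∀ e, u e ≠ 0 → e ⊆ A ∧ e.card = k + 1 + 1 := by
              intro e he
              rcases h.u_cases e with h' | h'
              · exact hw.supp e (h' ▸ he)
              · exact absurd h' he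
            have := light_card A (k + 1 + 1) (by omega) u (h.u_nonneg hw.nonneg) hs K (1 / 4) N
              (N / 2) (by norm_num) hK
              (fun v => (deg_mono (h.u_le hw.nonneg) _).trans (hw.deg_one hp v)) hA hrem
            refine this.trans ?_
            have h2 : min δ1 (1 / (4 * K)) * N ≤ 1 / (4 * K) * N := by
              gcongr; exact min_le_right _ _
            have h3 : (N / 2 - 1 / 4 * N) / K = 1 / (4 * K) * N := by field_simp; ring
            linarith
        · intro v hv
          obtain ⟨u', g', h', hvT⟩ := h.step hp hK hK'0 hw v (Finset.mem_filter.1 hv).2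
          refine (ihr u' g' (insert v T) h' ?_).mono le_rfl le_rfl ?_
          · rw [Finset.card_insert_of_notMem hvT]; omega
          · rintro I ⟨⟨hI, hTI⟩, hvI⟩
            exact ⟨hI, Finset.insert_subset hvI hTI⟩
    refine (main q w _ ∅ (Inv.init hp hK hK'0 w) (by simp)).mono ?_ le_rfl ?_
    · rw [← hq]; exact le_of_eq (by ring)
    · intro I hI; exact ⟨hI, by simp⟩

section Supersat

theorem ex_bddAbove {α : Type} (t n : ℕ) (H : Finset (Finset α)) :
    BddAbove {m : ℕ | ∃ G : Finset (Finset (Fin n)),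
      (∀ E ∈ G, E.card = t) ∧ ¬ HContains H G ∧ G.card = m} := by
  refine ⟨n.choose t, ?_⟩
  rintro m ⟨G, hG, _, rfl⟩
  have : G ⊆ (Finset.univ : Finset (Fin n)).powersetCard t := fun E hE => by
    simp [Finset.mem_powersetCard, hG E hE]
  simpa using Finset.card_le_card this

theorem le_ex {α : Type} {t n : ℕ} {H : Finset (Finset α)} {G : Finset (Finset (Fin n))}
    (hG : ∀ E ∈ G, E.card = t) (hf : ¬ HContains H G) : G.card ≤ exTuran t n H :=
  le_csSup (ex_bddAbove t n H) ⟨G, hG, hf, rfl⟩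

theorem ex_attained {α : Type} (t n : ℕ) {H : Finset (Finset α)} (he : 1 ≤ H.card) :
    ∃ G : Finset (Finset (Fin n)),
      (∀ E ∈ G, E.card = t) ∧ ¬ HContains H G ∧ G.card = exTuran t n H := by
  have hne : {m : ℕ | ∃ G : Finset (Finset (Fin n)),
      (∀ E ∈ G, E.card = t) ∧ ¬ HContains H G ∧ G.card = m}.Nonempty := by
    refine ⟨0, ∅, by simp, ?_, by simp⟩
    rintro ⟨f, _, h⟩
    obtain ⟨E, hE⟩ := Finset.card_pos.1 he
    simpa using h E hE
  exact Nat.sSup_mem hne (ex_bddAbove t n H)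

theorem ex_le_choose {α : Type} (t n : ℕ) {H : Finset (Finset α)} (he : 1 ≤ H.card) :
    exTuran t n H ≤ n.choose t := by
  obtain ⟨G, hG, _, hc⟩ := ex_attained t n he
  rw [← hc]
  have : G ⊆ (Finset.univ : Finset (Fin n)).powersetCard t := fun E hE => by
    simp [Finset.mem_powersetCard, hG E hE]
  simpa using Finset.card_le_card this

theorem hcontains_iff {α β : Type} [inst : DecidableEq β] {H : Finset (Finset α)}
    {G : Finset (Finset β)} :
    HContains H G ↔ ∃ f : α → β, Function.Injective f ∧ ∀ E ∈ H, E.image f ∈ G := by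
  obtain rfl : inst = (fun a b => Classical.propDecidable (a = b)) := Subsingleton.elim _ _
  rfl

theorem hcontains_mono {α β : Type} {H : Finset (Finset α)} {G G' : Finset (Finset β)}
    (h : HContains H G) (hs : G ⊆ G') : HContains H G' := by
  obtain ⟨f, h1, h2⟩ := h
  exact ⟨f, h1, fun E hE => hs (h2 E hE)⟩

theorem le_ex_subset {α : Type} {t n : ℕ} {H : Finset (Finset α)} (M : Finset (Fin n))
    {G : Finset (Finset (Fin n))} (hG : ∀ E ∈ G, E.card = t) (hM : ∀ E ∈ G, E ⊆ M)
    (hf : ¬ ∃ f : α → Fin n, Function.Injective f ∧ (∀ a, f a ∈ M) ∧ ∀ E ∈ H, E.image f ∈ G) :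
    G.card ≤ exTuran t M.card H := by
  let e : Fin M.card → Fin n := M.orderEmbOfFin rfl
  have he : Function.Injective e := (M.orderEmbOfFin rfl).injective
  let G' : Finset (Finset (Fin M.card)) := Finset.univ.filter fun E => E.image e ∈ G
  have h1 : G ⊆ G'.image (fun E => E.image e) := by
    intro F hF
    have hFe : (Finset.univ.filter fun i => e i ∈ F).image e = F := by
      ext x
      simp only [Finset.mem_image, Finset.mem_filter, Finset.mem_univ, true_and]
      constructor
      · rintro ⟨i, hi, rfl⟩; exact hi
      · intro hx
        have : x ∈ Set.range (M.orderEmbOfFin rfl) := by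
          rw [Finset.range_orderEmbOfFin]; exact hM F hF hx
        obtain ⟨i, rfl⟩ := this
        exact ⟨i, hx, rfl⟩
    refine Finset.mem_image.2 ⟨_, ?_, hFe⟩
    simp only [G', Finset.mem_filter, Finset.mem_univ, true_and]
    rw [hFe]; exact hF
  refine (Finset.card_le_card h1).trans (Finset.card_image_le.trans ?_)
  apply le_ex
  · intro E hE
    rw [← hG _ (Finset.mem_filter.1 hE).2, Finset.card_image_of_injective _ he]
  · rw [hcontains_iff]
    rintro ⟨f, hfi, hfH⟩
    apply hf
    refine ⟨e ∘ f, he.comp hfi, fun a => Finset.orderEmbOfFin_mem M rfl (f a), fun E hE => ?_⟩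
    have := (Finset.mem_filter.1 (hfH E hE)).2
    rw [Finset.image_image] at this
    exact this

theorem double_count {t n m : ℕ} (htm : t ≤ m) {G : Finset (Finset (Fin n))}
    (hG : ∀ E ∈ G, E.card = t) :
    ∑ M ∈ (Finset.univ : Finset (Fin n)).powersetCard m, (G.filter fun E => E ⊆ M).card =
      G.card * (n - t).choose (m - t) := by
  simp only [Finset.card_filter]
  rw [Finset.sum_comm]
  rw [Finset.sum_congr rfl (g := fun _ => (n - t).choose (m - t)), Finset.sum_const, smul_eq_mul]
  intro E hE
  rw [← Finset.card_filter]
  have := Finset.card_filter_powersetCard_subset E (Finset.univ : Finset (Fin n)) m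
    (by simp) (by rw [hG E hE]; exact htm)
  rw [hG E hE, Finset.card_fin] at this
  rw [← this]

/-- Turán density at `n`. -/
noncomputable def turanA {α : Type} (t : ℕ) (H : Finset (Finset α)) (n : ℕ) : ℝ :=
  (exTuran t n H : ℝ) / (n.choose t : ℝ)

theorem turanA_anti {α : Type} {t m n : ℕ} {H : Finset (Finset α)} (he : 1 ≤ H.card)
    (htm : t ≤ m) (hmn : m ≤ n) : turanA t H n ≤ turanA t H m := by
  obtain ⟨G, hG, hf, hc⟩ := ex_attained t n he
  have h1 := double_count htm hG
  have h2 : ∑ M ∈ (Finset.univ : Finset (Fin n)).powersetCard m, (G.filter fun E => E ⊆ M).card ≤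
      n.choose m * exTuran t m H := by
    refine (Finset.sum_le_card_nsmul _ _ (exTuran t m H) ?_).trans (by simp)
    intro M hM
    have hMc := (Finset.mem_powersetCard.1 hM).2
    rw [← hMc]
    apply le_ex_subset
    · intro E hE; exact hG E (Finset.mem_filter.1 hE).1
    · intro E hE; exact (Finset.mem_filter.1 hE).2
    · rintro ⟨f, h1, _, h2⟩
      exact hf (hcontains_iff.2 ⟨f, h1, fun E hE => (Finset.mem_filter.1 (h2 E hE)).1⟩)
  rw [h1, hc] at h2
  have h3 := Nat.choose_mul (n := n) htm
  have p1 : 0 < n.choose m := Nat.choose_pos hmn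
  have p2 : 0 < n.choose t := Nat.choose_pos (htm.trans hmn)
  have p3 : 0 < m.choose t := Nat.choose_pos htm
  unfold turanA
  rw [div_le_div_iff₀ (by exact_mod_cast p2) (by exact_mod_cast p3)]
  have h4 : exTuran t n H * m.choose t * n.choose m ≤ exTuran t m H * n.choose t * n.choose m := by
    calc exTuran t n H * m.choose t * n.choose m = exTuran t n H * (n.choose m * m.choose t) := by
          ring
      _ = n.choose t * (exTuran t n H * (n - t).choose (m - t)) := by rw [h3]; ring
      _ ≤ n.choose t * (n.choose m * exTuran t m H) := by gcongr
      _ = _ := by ring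
  exact_mod_cast Nat.le_of_mul_le_mul_right h4 p1

theorem exists_m0 {α : Type} {t : ℕ} {H : Finset (Finset α)} (v : ℕ) {η : ℝ} (hη : 0 < η) :
    ∃ m0, v ≤ m0 ∧ ∀ n, m0 ≤ n → turanA t H m0 ≤ turanA t H n + η := by
  let S : Set ℝ := Set.image (turanA t H) {n | v ≤ n}
  have hne : S.Nonempty := ⟨_, v, le_refl v, rfl⟩
  have hb : BddBelow S := by
    refine ⟨0, ?_⟩
    rintro _ ⟨n, _, rfl⟩
    unfold turanA; positivity
  obtain ⟨_, ⟨m0, hm0, rfl⟩, h⟩ := exists_lt_of_csInf_lt hne (show sInf S < sInf S + η by linarith)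
  refine ⟨m0, hm0, fun n hn => ?_⟩
  have := csInf_le hb (show turanA t H n ∈ S from ⟨n, le_trans hm0 hn, rfl⟩)
  linarith

/-- Copies of `H` in `G`. -/
noncomputable def copies {α : Type} [Fintype α] {n : ℕ} (H : Finset (Finset α))
    (G : Finset (Finset (Fin n))) : Finset (α → Fin n) :=
  Finset.univ.filter fun f => Function.Injective f ∧ ∀ E ∈ H, E.image f ∈ G

theorem supersat {α : Type} [Fintype α] {t : ℕ} {H : Finset (Finset α)}
    (hv : t + 1 ≤ Fintype.card α) {δ : ℝ} (hδ : 0 < δ) :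
    ∃ c : ℝ, 0 < c ∧ ∃ n0 : ℕ, ∀ n, n0 ≤ n → ∀ G : Finset (Finset (Fin n)),
      (∀ E ∈ G, E.card = t) → (exTuran t n H : ℝ) + δ * (n : ℝ) ^ t ≤ G.card →
      c * (n : ℝ) ^ Fintype.card α ≤ (copies H G).card := by
  obtain ⟨v, hvdef⟩ : ∃ v, v = Fintype.card α := ⟨_, rfl⟩
  rw [← hvdef] at hv ⊢
  obtain ⟨m, hvm, hm⟩ := exists_m0 (t := t) (H := H) v (half_pos hδ)
  have htm : t ≤ m := by omega
  have pmv : (0 : ℝ) < m.choose v := by exact_mod_cast Nat.choose_pos hvm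
  have pmt : (0 : ℝ) < m.choose t := by exact_mod_cast Nat.choose_pos htm
  refine ⟨δ / 2 / (2 ^ v * v.factorial * m.choose v), by positivity, m + 2 * v, ?_⟩
  intro n hn G hG hGc
  have hmn : m ≤ n := by omega
  have pnt : (0 : ℝ) < n.choose t := by exact_mod_cast Nat.choose_pos (htm.trans hmn)
  have pnm : (0 : ℝ) < n.choose m := by exact_mod_cast Nat.choose_pos hmn
  let B := ((Finset.univ : Finset (Fin n)).powersetCard m).filter
    fun M => exTuran t m H < (G.filter fun E => E ⊆ M).card
  have h1 := double_count htm hG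
  have h2 : ∑ M ∈ (Finset.univ : Finset (Fin n)).powersetCard m, (G.filter fun E => E ⊆ M).card ≤
      n.choose m * exTuran t m H + B.card * m.choose t := by
    have : ∀ M ∈ (Finset.univ : Finset (Fin n)).powersetCard m, (G.filter fun E => E ⊆ M).card ≤
        exTuran t m H + if exTuran t m H < (G.filter fun E => E ⊆ M).card then m.choose t else 0 := by
      intro M hM
      have hMc := (Finset.mem_powersetCard.1 hM).2
      split_ifs with h
      · have : (G.filter fun E => E ⊆ M) ⊆ M.powersetCard t := by
          intro E hE
          obtain ⟨q1, q2⟩ := Finset.mem_filter.1 hE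
          exact Finset.mem_powersetCard.2 ⟨q2, hG E q1⟩
        have := Finset.card_le_card this
        rw [Finset.card_powersetCard, hMc] at this
        omega
      · omega
    refine (Finset.sum_le_sum this).trans (le_of_eq ?_)
    rw [Finset.sum_add_distrib, ← Finset.sum_filter, Finset.sum_const, Finset.sum_const]
    simp [B]
  rw [h1] at h2
  have h3 := Nat.choose_mul (n := n) htm
  have h4 : (δ / 2) * n.choose m ≤ B.card := by
    have e2 : (G.card : ℝ) * (n - t).choose (m - t) ≤
      n.choose m * exTuran t m H + B.card * m.choose t := by exact_mod_cast h2
    have e3 : (n.choose m : ℝ) * m.choose t = n.choose t * (n - t).choose (m - t) := by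
      exact_mod_cast h3
    have e4 : (n.choose t : ℝ) ≤ (n : ℝ) ^ t := by exact_mod_cast Nat.choose_le_pow n t
    have e5 : (turanA t H n + δ) * n.choose t ≤ G.card := by
      refine le_trans ?_ hGc
      unfold turanA
      rw [add_mul, div_mul_cancel₀ _ pnt.ne']
      gcongr
    have e6 : turanA t H m + δ / 2 ≤ turanA t H n + δ := by linarith [hm n hmn]
    have e7 : (turanA t H m + δ / 2) * (n.choose m * m.choose t) ≤
        turanA t H m * (n.choose m * m.choose t) + B.card * m.choose t := by
      calc (turanA t H m + δ / 2) * (n.choose m * m.choose t)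
          ≤ (turanA t H n + δ) * (n.choose m * m.choose t) := by gcongr
        _ = ((turanA t H n + δ) * n.choose t) * (n - t).choose (m - t) := by rw [e3]; ring
        _ ≤ G.card * (n - t).choose (m - t) := by gcongr
        _ ≤ _ := e2
        _ = _ := by unfold turanA; field_simp
    have e8 : (δ / 2 * n.choose m) * m.choose t ≤ B.card * m.choose t := by linarith
    exact le_of_mul_le_mul_right e8 pmt
  have h5 : B.card ≤ (copies H G).card * (n - v).choose (m - v) := by
    have hsub : B ⊆ (copies H G).biUnion fun f =>
        ((Finset.univ : Finset (Fin n)).powersetCard m).filter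
          fun M => Finset.univ.image f ⊆ M := by
      intro M hM
      obtain ⟨q1, q2⟩ := Finset.mem_filter.1 hM
      have hMc := (Finset.mem_powersetCard.1 q1).2
      -- find a copy inside M
      have hcopy : ∃ f : α → Fin n, Function.Injective f ∧ (∀ a, f a ∈ M) ∧
          ∀ E ∈ H, E.image f ∈ G.filter fun E => E ⊆ M := by
        by_contra hc
        have := le_ex_subset (t := t) M (G := G.filter fun E => E ⊆ M)
          (fun E hE => hG E (Finset.mem_filter.1 hE).1)
          (fun E hE => (Finset.mem_filter.1 hE).2) hc
        rw [hMc] at this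
        omega
      obtain ⟨f, f1, f2, f3⟩ := hcopy
      refine Finset.mem_biUnion.2 ⟨f, ?_, Finset.mem_filter.2 ⟨q1, ?_⟩⟩
      · exact Finset.mem_filter.2 ⟨Finset.mem_univ _, f1, fun E hE =>
          (Finset.mem_filter.1 (f3 E hE)).1⟩
      · intro x hx
        obtain ⟨a, _, rfl⟩ := Finset.mem_image.1 hx
        exact f2 a
    refine (Finset.card_le_card hsub).trans ?_
    refine Finset.card_biUnion_le_card_mul _ _ _ ?_
    intro f hf
    have hfi := (Finset.mem_filter.1 hf).2.1
    have hc : (Finset.univ.image f).card = v := by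
      rw [Finset.card_image_of_injective _ hfi, hvdef, Finset.card_univ]
    have := Finset.card_filter_powersetCard_subset (Finset.univ.image f)
      (Finset.univ : Finset (Fin n)) m (by simp) (by rw [hc]; exact hvm)
    rw [hc, Finset.card_fin] at this
    rw [← this]
  have h6 := Nat.choose_mul (n := n) hvm
  have pnv : (0 : ℝ) < (n - v).choose (m - v) := by
    exact_mod_cast Nat.choose_pos (by omega)
  have h7 : δ / 2 * n.choose v ≤ (copies H G).card * m.choose v := by
    have e1 : (B.card : ℝ) ≤ (copies H G).card * (n - v).choose (m - v) := by exact_mod_cast h5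
    have e2 : (n.choose m : ℝ) * m.choose v = n.choose v * (n - v).choose (m - v) := by
      exact_mod_cast h6
    have : (δ / 2 * n.choose v) * (n - v).choose (m - v) ≤
        ((copies H G).card * m.choose v) * (n - v).choose (m - v) := by
      calc (δ / 2 * n.choose v) * (n - v).choose (m - v)
          = (δ / 2 * n.choose m) * m.choose v := by rw [mul_assoc, ← e2]; ring
        _ ≤ ((copies H G).card * (n - v).choose (m - v)) * m.choose v := by
          exact mul_le_mul_of_nonneg_right (h4.trans e1) pmv.le
        _ = _ := by ring
    exact le_of_mul_le_mul_right this pnv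
  have h8 : (n : ℝ) ^ v ≤ 2 ^ v * v.factorial * n.choose v := by
    have := Nat.pow_le_choose (α := ℝ) v n
    rw [div_le_iff₀ (by positivity)] at this
    calc (n : ℝ) ^ v = 2 ^ v * ((n : ℝ) / 2) ^ v := by rw [← mul_pow]; congr 1; ring
      _ ≤ 2 ^ v * ((n + 1 - v : ℕ) : ℝ) ^ v := by
        gcongr
        rw [Nat.cast_sub (by omega)]
        have : ((2 * v : ℕ) : ℝ) ≤ n := by exact_mod_cast (by omega : 2 * v ≤ n)
        push_cast at this ⊢
        linarith
      _ ≤ 2 ^ v * (n.choose v * v.factorial) := by gcongr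
      _ = _ := by ring
  rw [div_mul_eq_mul_div, div_le_iff₀ (by positivity)]
  calc δ / 2 * (n : ℝ) ^ v ≤ δ / 2 * (2 ^ v * v.factorial * n.choose v) := by gcongr
    _ = 2 ^ v * v.factorial * (δ / 2 * n.choose v) := by ring
    _ ≤ 2 ^ v * v.factorial * ((copies H G).card * m.choose v) := by gcongr
    _ = _ := by ring

end Supersat

section Copies

/-- The edge set of the copy of `H` given by `f`. -/
noncomputable def edgeOf {α : Type} {n : ℕ} (H : Finset (Finset α)) (f : α → Fin n) :
    Finset (Finset (Fin n)) := H.image fun E => E.image f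

/-- The weighted hypergraph of copies of `H`. -/
noncomputable def copyW {α : Type} [Fintype α] {n : ℕ} (H : Finset (Finset α)) (l : ℝ)
    (A : Finset (Finset (Fin n))) (e : Finset (Finset (Fin n))) : ℝ :=
  l * ((copies H A).filter fun f => edgeOf H f = e).card

theorem image_injective' {α β : Type} [DecidableEq β] {f : α → β} (hf : Function.Injective f) :
    Function.Injective (fun E : Finset α => E.image f) := Finset.image_injective hf

theorem card_edgeOf {α : Type} {n : ℕ} (H : Finset (Finset α)) {f : α → Fin n}
    (hf : Function.Injective f) : (edgeOf H f).card = H.card :=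
  Finset.card_image_of_injective _ (image_injective' hf)

theorem copy_count {α : Type} [Fintype α] {n : ℕ} (H : Finset (Finset α))
    (S : Finset (Finset (Fin n))) (l p B : ℝ) (hl : 0 ≤ l) (hp : 0 ≤ p) (hB : 0 ≤ B)
    (hd : ∀ H' ⊆ H, H'.Nonempty → l * p * (n : ℝ) ^ (Fintype.card α - (H'.biUnion id).card) ≤
      B * p ^ H'.card) (hS : S.Nonempty) :
    l * p * (((Finset.univ : Finset (α → Fin n)).filter fun f => Function.Injective f ∧
      edgeOf H f = S).card : ℝ) ≤ (Fintype.card α : ℝ) ^ (Fintype.card α) * (B * p ^ S.card) := by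
  by_cases hne : ∃ f : α → Fin n, Function.Injective f ∧ edgeOf H f = S
  swap
  · rw [Finset.filter_false_of_mem]
    · simp; positivity
    · intro f _ h; exact hne ⟨f, h⟩
  obtain ⟨f0, hf0, he0⟩ := hne
  have hcard : H.card = S.card := by rw [← he0, card_edgeOf H hf0]
  have hHne : H.Nonempty := by
    rw [← Finset.card_pos, hcard, Finset.card_pos]; exact hS
  let U := H.biUnion id
  let W := S.biUnion id
  have himg : ∀ f : α → Fin n, edgeOf H f = S → U.image f = W := by
    intro f hf
    ext x
    simp only [U, W, ← hf, edgeOf, Finset.mem_image, Finset.mem_biUnion, id]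
    constructor
    · rintro ⟨a, ⟨E, hE, ha⟩, rfl⟩
      exact ⟨_, ⟨E, hE, rfl⟩, Finset.mem_image_of_mem _ ha⟩
    · rintro ⟨_, ⟨E, hE, rfl⟩, hx⟩
      obtain ⟨a, ha, rfl⟩ := Finset.mem_image.1 hx
      exact ⟨a, ⟨E, hE, ha⟩, rfl⟩
  have hWU : W.card = U.card := by
    rw [← himg f0 he0, Finset.card_image_of_injective _ hf0]
  have hUv : U.card ≤ Fintype.card α := Finset.card_le_univ U
  have hsub : ((Finset.univ : Finset (α → Fin n)).filter fun f => Function.Injective f ∧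
      edgeOf H f = S) ⊆ Fintype.piFinset fun a => if a ∈ U then W else Finset.univ := by
    intro f hf
    have hf := (Finset.mem_filter.1 hf).2.2
    rw [Fintype.mem_piFinset]
    intro a
    split_ifs with ha
    · rw [← himg f hf]; exact Finset.mem_image_of_mem _ ha
    · exact Finset.mem_univ _
  have h1 := Finset.card_le_card hsub
  have h2 : (Fintype.piFinset fun a => if a ∈ U then W else Finset.univ).card =
      U.card ^ U.card * n ^ (Fintype.card α - U.card) := by
    rw [Fintype.card_piFinset]
    have : ∀ a, (if a ∈ U then W else (Finset.univ : Finset (Fin n))).card =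
        if a ∈ U then U.card else n := by
      intro a; split_ifs <;> simp [hWU]
    simp only [this]
    rw [Finset.prod_ite, Finset.prod_const, Finset.prod_const]
    congr 2
    · congr 1; ext; simp
    · rw [← Finset.card_compl]; congr 1; ext; simp
  rw [h2] at h1
  have h3 : U.card ^ U.card ≤ (Fintype.card α) ^ (Fintype.card α) := by
    rcases Nat.eq_zero_or_pos (Fintype.card α) with h | h
    · have : U.card = 0 := by omega
      rw [h, this]
    · exact (Nat.pow_le_pow_left hUv _).trans (Nat.pow_le_pow_right h hUv)
  have h4 : (((Finset.univ : Finset (α → Fin n)).filter fun f => Function.Injective f ∧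
      edgeOf H f = S).card : ℝ) ≤ (Fintype.card α : ℝ) ^ (Fintype.card α) *
        (n : ℝ) ^ (Fintype.card α - U.card) := by
    exact_mod_cast h1.trans (Nat.mul_le_mul_right _ h3)
  calc _ ≤ l * p * ((Fintype.card α : ℝ) ^ (Fintype.card α) *
        (n : ℝ) ^ (Fintype.card α - U.card)) := by gcongr
    _ = (Fintype.card α : ℝ) ^ (Fintype.card α) *
        (l * p * (n : ℝ) ^ (Fintype.card α - U.card)) := by ring
    _ ≤ (Fintype.card α : ℝ) ^ (Fintype.card α) * (B * p ^ H.card) := by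
      exact mul_le_mul_of_nonneg_left (hd H subset_rfl hHne) (by positivity)
    _ = _ := by rw [hcard]

theorem copyW_deg {α : Type} [Fintype α] {n : ℕ} (H : Finset (Finset α)) (l : ℝ)
    (A : Finset (Finset (Fin n))) (S : Finset (Finset (Fin n))) :
    deg (copyW H l A) S = l * ((copies H A).filter fun f => S ⊆ edgeOf H f).card := by
  unfold deg copyW
  rw [← Finset.mul_sum]
  congr 1
  rw [Finset.card_eq_sum_card_fiberwise (f := edgeOf H)
    (t := Finset.univ.filter fun e => S ⊆ e)]
  · push_cast
    refine Finset.sum_congr (by ext e; simp) fun e he => ?_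
    have := (Finset.mem_filter.1 he).2
    congr 2
    ext f
    simp only [Finset.mem_filter]
    constructor
    · rintro ⟨h1, h2⟩; exact ⟨⟨h1, h2 ▸ this⟩, h2⟩
    · rintro ⟨⟨h1, _⟩, h2⟩; exact ⟨h1, h2⟩
  · intro f hf
    have hf : f ∈ (copies H A).filter fun f => S ⊆ edgeOf H f := hf
    simpa using (Finset.mem_filter.1 hf).2

theorem copyW_hyp {α : Type} [Fintype α] {n : ℕ} (H : Finset (Finset α)) (l p B N : ℝ)
    (A : Finset (Finset (Fin n))) (hl : 0 ≤ l) (hp : 0 ≤ p) (hB : 0 ≤ B)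
    (hd : ∀ H' ⊆ H, H'.Nonempty → l * p * (n : ℝ) ^ (Fintype.card α - (H'.biUnion id).card) ≤
      B * p ^ H'.card) (hN : N ≤ l * (copies H A).card) :
    Hyp A N p H.card (2 ^ H.card * ((Fintype.card α : ℝ) ^ (Fintype.card α) * B))
      (copyW H l A) where
  nonneg := by intro e; unfold copyW; positivity
  supp := by
    intro e he
    have : ((copies H A).filter fun f => edgeOf H f = e).Nonempty := by
      rw [Finset.nonempty_iff_ne_empty]
      intro h; apply he; simp [copyW, h]
    obtain ⟨f, hf⟩ := this
    obtain ⟨h1, rfl⟩ := Finset.mem_filter.1 hf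
    obtain ⟨h2, h3⟩ := (Finset.mem_filter.1 h1).2
    refine ⟨?_, card_edgeOf H h2⟩
    intro F hF
    obtain ⟨E, hE, rfl⟩ := Finset.mem_image.1 hF
    exact h3 E hE
  deg_le := by
    intro S hS
    rw [copyW_deg]
    have hsub : ((copies H A).filter fun f => S ⊆ edgeOf H f) ⊆ H.powerset.biUnion fun H' =>
        (Finset.univ : Finset (α → Fin n)).filter fun f => Function.Injective f ∧
          edgeOf H' f = S := by
      intro f hf
      obtain ⟨h1, h2⟩ := Finset.mem_filter.1 hf
      obtain ⟨h3, h4⟩ := (Finset.mem_filter.1 h1).2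
      refine Finset.mem_biUnion.2 ⟨H.filter fun E => E.image f ∈ S, by simp, ?_⟩
      refine Finset.mem_filter.2 ⟨Finset.mem_univ _, h3, ?_⟩
      ext F
      simp only [edgeOf, Finset.mem_image, Finset.mem_filter]
      constructor
      · rintro ⟨E, ⟨_, h⟩, rfl⟩; exact h
      · intro hF
        obtain ⟨E, hE, rfl⟩ := Finset.mem_image.1 (h2 hF)
        exact ⟨E, ⟨hE, hF⟩, rfl⟩
    have h1 : (((copies H A).filter fun f => S ⊆ edgeOf H f).card : ℝ) ≤
        ∑ H' ∈ H.powerset, (((Finset.univ : Finset (α → Fin n)).filter fun f =>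
          Function.Injective f ∧ edgeOf H' f = S).card : ℝ) := by
      exact_mod_cast (Finset.card_le_card hsub).trans Finset.card_biUnion_le
    calc _ = l * p * (((copies H A).filter fun f => S ⊆ edgeOf H f).card : ℝ) := by ring
      _ ≤ l * p * ∑ H' ∈ H.powerset, (((Finset.univ : Finset (α → Fin n)).filter fun f =>
          Function.Injective f ∧ edgeOf H' f = S).card : ℝ) := by gcongr
      _ = ∑ H' ∈ H.powerset, l * p * (((Finset.univ : Finset (α → Fin n)).filter fun f =>
          Function.Injective f ∧ edgeOf H' f = S).card : ℝ) := by rw [Finset.mul_sum]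
      _ ≤ ∑ H' ∈ H.powerset, (Fintype.card α : ℝ) ^ (Fintype.card α) * (B * p ^ S.card) := by
        refine Finset.sum_le_sum fun H' hH' => ?_
        exact copy_count H' S l p B hl hp hB
          (fun H'' h => hd H'' (h.trans (Finset.mem_powerset.1 hH'))) hS
      _ = _ := by
        rw [Finset.sum_const, Finset.card_powerset, nsmul_eq_mul]; push_cast; ring
  tot := by
    rw [← deg_empty, copyW_deg]
    simpa using hN

theorem copyW_indep {α : Type} [Fintype α] {n : ℕ} (H : Finset (Finset α)) (l : ℝ)
    (A I : Finset (Finset (Fin n))) (hI : ¬ HContains H I) : Indep (copyW H l A) I := by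
  intro e he heI
  have : ((copies H A).filter fun f => edgeOf H f = e).Nonempty := by
    rw [Finset.nonempty_iff_ne_empty]
    intro h; simp [copyW, h] at he
  obtain ⟨f, hf⟩ := this
  obtain ⟨h1, rfl⟩ := Finset.mem_filter.1 hf
  obtain ⟨h2, h3⟩ := (Finset.mem_filter.1 h1).2
  exact hI (hcontains_iff.2 ⟨f, h2, fun E hE => heI (Finset.mem_image_of_mem _ hE)⟩)

end Copies

section Density

theorem tDensity_bdd {α : Type} [Fintype α] (t : ℕ) (H : Finset (Finset α)) :
    BddAbove {x : ℝ | ∃ s : Finset α, t + 1 ≤ s.card ∧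
      x = (((H.filter fun E => E ⊆ s).card : ℝ) - 1) / ((s.card : ℝ) - (t : ℝ))} := by
  apply Set.Finite.bddAbove
  refine (Set.finite_range fun s : Finset α =>
    (((H.filter fun E => E ⊆ s).card : ℝ) - 1) / ((s.card : ℝ) - (t : ℝ))).subset ?_
  rintro x ⟨s, _, rfl⟩
  exact ⟨s, rfl⟩

theorem le_tDensity {α : Type} [Fintype α] {t : ℕ} {H : Finset (Finset α)} {s : Finset α}
    (hs : t + 1 ≤ s.card) :
    (((H.filter fun E => E ⊆ s).card : ℝ) - 1) / ((s.card : ℝ) - (t : ℝ)) ≤ tDensity t H :=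
  le_csSup (tDensity_bdd t H) ⟨s, hs, rfl⟩

theorem tDensity_one {α : Type} [Fintype α] {t : ℕ} {H : Finset (Finset α)}
    (hv : t + 1 ≤ Fintype.card α) (hH : H.card = 1) : tDensity t H = 0 := by
  apply le_antisymm
  · refine csSup_le ⟨_, Finset.univ, by simpa using hv, rfl⟩ ?_
    rintro x ⟨s, hs, rfl⟩
    apply div_nonpos_of_nonpos_of_nonneg
    · have : (H.filter fun E => E ⊆ s).card ≤ 1 := hH ▸ Finset.card_filter_le _ _
      have : ((H.filter fun E => E ⊆ s).card : ℝ) ≤ 1 := by exact_mod_cast this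
      linarith
    · have : ((t + 1 : ℕ) : ℝ) ≤ s.card := by exact_mod_cast hs
      push_cast at this; linarith
  · have := le_tDensity (t := t) (H := H) (s := Finset.univ) (by simpa using hv)
    refine le_trans (le_of_eq ?_) this
    simp [hH]

theorem tDensity_ge {α : Type} [Fintype α] {t : ℕ} {H : Finset (Finset α)}
    (hHuni : ∀ E ∈ H, E.card = t) (hH : 2 ≤ H.card) (ht : 2 ≤ t) :
    1 / (t : ℝ) ≤ tDensity t H := by
  obtain ⟨E1, h1, E2, h2, hne⟩ := Finset.one_lt_card.1 (show 1 < H.card by omega)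
  have hc1 := hHuni _ h1
  have hc2 := hHuni _ h2
  have hU : t + 1 ≤ (E1 ∪ E2).card := by
    by_contra hlt
    have e1 : E1 = E1 ∪ E2 := Finset.eq_of_subset_of_card_le Finset.subset_union_left (by omega)
    have e2 : E2 = E1 ∪ E2 := Finset.eq_of_subset_of_card_le Finset.subset_union_right (by omega)
    exact hne (e1.trans e2.symm)
  refine le_trans ?_ (le_tDensity hU)
  have hU2 : (E1 ∪ E2).card ≤ t + t := (Finset.card_union_le _ _).trans (by omega)
  have hf : 2 ≤ (H.filter fun E => E ⊆ E1 ∪ E2).card := by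
    apply Finset.one_lt_card.2
    exact ⟨E1, Finset.mem_filter.2 ⟨h1, Finset.subset_union_left⟩, E2,
      Finset.mem_filter.2 ⟨h2, Finset.subset_union_right⟩, hne⟩
  have r1 : ((t + 1 : ℕ) : ℝ) ≤ (E1 ∪ E2).card := by exact_mod_cast hU
  have r2 : ((E1 ∪ E2).card : ℝ) ≤ ((t + t : ℕ) : ℝ) := by exact_mod_cast hU2
  have r3 : (2 : ℝ) ≤ (H.filter fun E => E ⊆ E1 ∪ E2).card := by exact_mod_cast hf
  push_cast at r1 r2
  apply div_le_div₀ <;> linarith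

theorem density_ineq {α : Type} [Fintype α] {t : ℕ} {H : Finset (Finset α)}
    (hHuni : ∀ E ∈ H, E.card = t) (hμ : 0 < tDensity t H) {n : ℕ} (hn : 1 ≤ n)
    (H' : Finset (Finset α)) (hH' : H' ⊆ H) (hne : H'.Nonempty) :
    (n : ℝ) ^ t * (n : ℝ) ^ (-(1 / tDensity t H)) ≤
      ((n : ℝ) ^ (-(1 / tDensity t H))) ^ H'.card * (n : ℝ) ^ (H'.biUnion id).card := by
  have hn0 : (0 : ℝ) < n := by exact_mod_cast hn
  have hn1 : (1 : ℝ) ≤ n := by exact_mod_cast hn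
  set μ := tDensity t H with hμdef
  set U := H'.biUnion id
  have hsubU : ∀ E ∈ H', E ⊆ U := fun E hE => Finset.subset_biUnion_of_mem id hE
  rw [← Real.rpow_natCast, ← Real.rpow_natCast, ← Real.rpow_natCast, ← Real.rpow_mul hn0.le,
    ← Real.rpow_add hn0, ← Real.rpow_add hn0]
  apply Real.rpow_le_rpow_of_exponent_le hn1
  by_cases hU : t + 1 ≤ U.card
  · have h1 := le_tDensity (H := H) hU
    have hsub : H' ⊆ H.filter fun E => E ⊆ U := fun E hE =>
      Finset.mem_filter.2 ⟨hH' hE, hsubU E hE⟩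
    have h2 : (H'.card : ℝ) ≤ (H.filter fun E => E ⊆ U).card := by
      exact_mod_cast Finset.card_le_card hsub
    have r1 : ((t + 1 : ℕ) : ℝ) ≤ U.card := by exact_mod_cast hU
    push_cast at r1
    rw [div_le_iff₀ (by linarith)] at h1
    have h3 : ((H'.card : ℝ) - 1) / μ ≤ U.card - t := by
      rw [div_le_iff₀ hμ]
      linarith
    have h4 : ((H'.card : ℝ) - 1) / μ = 1 / μ * H'.card - 1 / μ := by ring
    linarith
  · obtain ⟨E, hE⟩ := hne
    have hEU : ∀ F ∈ H', F = U := fun F hF =>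
      Finset.eq_of_subset_of_card_le (hsubU F hF) (by rw [hHuni F (hH' hF)]; omega)
    have hc : H'.card = 1 := Finset.card_eq_one.2 ⟨U, by
      ext F; rw [Finset.mem_singleton]
      exact ⟨hEU F, fun h => by rw [h, ← hEU E hE]; exact hE⟩⟩
    have hUt : U.card = t := by rw [← hEU E hE]; exact hHuni E (hH' hE)
    rw [hc, hUt]; push_cast; linarith

end Density

theorem containers {α : Type} [Fintype α] {t : ℕ} (ht : 2 ≤ t) {H : Finset (Finset α)}
    (hHuni : ∀ E ∈ H, E.card = t) (hv : t + 1 ≤ Fintype.card α) (hH : 2 ≤ H.card)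
    {δ : ℝ} (hδ : 0 < δ) :
    ∃ D n0 : ℕ, ∀ n, n0 ≤ n → HasScheme (V := Finset (Fin n))
      (D * ⌈(n : ℝ) ^ ((t : ℝ) - 1 / tDensity t H)⌉₊) (exTuran t n H + δ * (n : ℝ) ^ t)
      (fun I => ¬ HContains H I ∧ I ⊆ (Finset.univ : Finset (Fin n)).powersetCard t) := by
  obtain ⟨c, hc, n1, hsat⟩ := supersat (H := H) hv hδ
  have hμt := tDensity_ge hHuni hH ht
  have ht0 : (0 : ℝ) < t := by exact_mod_cast (by omega : 0 < t)
  have hμ : 0 < tDensity t H := lt_of_lt_of_le (by positivity) hμt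
  have hvpos : 0 < Fintype.card α := by omega
  obtain ⟨k, hk⟩ : ∃ k, H.card = k + 1 := ⟨H.card - 1, by omega⟩
  obtain ⟨K, hK⟩ : ∃ K : ℝ, K =
    2 ^ H.card * ((Fintype.card α : ℝ) ^ (Fintype.card α) * (1 / c)) := ⟨_, rfl⟩
  have hK0 : 0 < K := by rw [hK]; positivity
  obtain ⟨δ', hδ', D, p0, hp0, hstep⟩ := one_step k K hK0
  have hlim : ∀ᶠ n : ℕ in Filter.atTop, (n : ℝ) ^ (-(1 / tDensity t H)) ≤ p0 := by
    have := (tendsto_rpow_neg_atTop (show 0 < 1 / tDensity t H by positivity)).comp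
      tendsto_natCast_atTop_atTop
    exact (this.eventually (Iio_mem_nhds hp0)).mono fun n hn => le_of_lt hn
  obtain ⟨n2, hn2⟩ := Filter.eventually_atTop.1 hlim
  refine ⟨⌈1 / δ'⌉₊ * D, n1 + n2 + 1, fun n hn => ?_⟩
  have hn1 : 1 ≤ n := by omega
  have hnpos : (0 : ℝ) < n := by exact_mod_cast hn1
  obtain ⟨p, hp⟩ : ∃ p : ℝ, p = (n : ℝ) ^ (-(1 / tDensity t H)) := ⟨_, rfl⟩
  have hppos : 0 < p := by rw [hp]; positivity
  have hpN : (n : ℝ) ^ ((t : ℝ) - 1 / tDensity t H) = p * (n : ℝ) ^ t := by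
    rw [hp, ← Real.rpow_natCast, ← Real.rpow_add hnpos]; congr 1; ring
  have hpN1 : 1 ≤ p * (n : ℝ) ^ t := by
    rw [← hpN]
    apply Real.one_le_rpow (by exact_mod_cast hn1)
    have : 1 / tDensity t H ≤ t := by
      rw [div_le_iff₀ hμ]
      rw [div_le_iff₀ ht0] at hμt
      linarith
    linarith
  have hN0 : (0 : ℝ) < (n : ℝ) ^ t := by positivity
  rw [hpN]
  have main : ∀ j : ℕ, ∀ A : Finset (Finset (Fin n)),
      A ⊆ (Finset.univ : Finset (Fin n)).powersetCard t →
      (A.card : ℝ) ≤ exTuran t n H + δ * (n : ℝ) ^ t + j * (δ' * (n : ℝ) ^ t) →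
      HasScheme (V := Finset (Fin n)) (j * (D * ⌈p * (n : ℝ) ^ t⌉₊))
        (exTuran t n H + δ * (n : ℝ) ^ t) (fun I => ¬ HContains H I ∧ I ⊆ A) := by
    intro j
    induction j with
    | zero =>
      intro A _ hA
      rw [zero_mul]
      exact HasScheme.const A (fun I hI => hI.2) (by simpa using hA)
    | succ j ih =>
      intro A hAt hA
      by_cases hsmall : (A.card : ℝ) ≤ exTuran t n H + δ * (n : ℝ) ^ t
      · exact (HasScheme.const A (fun I hI => hI.2) hsmall).mono (Nat.zero_le _) le_rfl
          (fun _ h => h)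
      · push Not at hsmall
        have hcop := hsat n (by omega) A (fun E hE => (Finset.mem_powersetCard.1 (hAt hE)).2)
          hsmall.le
        have hAN : (A.card : ℝ) ≤ (n : ℝ) ^ t := by
          have := Finset.card_le_card hAt
          rw [Finset.card_powersetCard, Finset.card_fin] at this
          exact_mod_cast this.trans (Nat.choose_le_pow n t)
        have hhyp := copyW_hyp H ((n : ℝ) ^ t / (c * (n : ℝ) ^ Fintype.card α)) p (1 / c)
          ((n : ℝ) ^ t) A (by positivity) hppos.le (by positivity) (by
            intro H' hH' hne
            have h1 := density_ineq hHuni hμ hn1 H' hH' hne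
            rw [← hp] at h1
            have hU : (H'.biUnion id).card ≤ Fintype.card α := Finset.card_le_univ _
            have h2 : (n : ℝ) ^ Fintype.card α = (n : ℝ) ^ (Fintype.card α - (H'.biUnion id).card) *
              (n : ℝ) ^ (H'.biUnion id).card := by rw [← pow_add]; congr 1; omega
            rw [h2]
            have h3 : (0 : ℝ) < (n : ℝ) ^ (H'.biUnion id).card := by positivity
            have h4 : (0 : ℝ) < (n : ℝ) ^ (Fintype.card α - (H'.biUnion id).card) := by positivity
            calc _ = ((n : ℝ) ^ t * p) / (c * (n : ℝ) ^ (H'.biUnion id).card) := by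
                  field_simp
              _ ≤ (p ^ H'.card * (n : ℝ) ^ (H'.biUnion id).card) /
                  (c * (n : ℝ) ^ (H'.biUnion id).card) := by gcongr
              _ = _ := by field_simp) (by
            rw [div_mul_eq_mul_div, le_div_iff₀ (by positivity)]
            gcongr)
        rw [← hK, hk] at hhyp
        have hone := hstep (Finset (Fin n)) A ((n : ℝ) ^ t) p _ hppos
          (by rw [hp]; exact hn2 n (by omega)) hpN1 hAN hhyp
        have hone' := hone.mono (Q := fun I => ¬ HContains H I ∧ I ⊆ A) le_rfl le_rfl
          (fun I hI => ⟨copyW_indep H _ A I hI.1, hI.2⟩)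
        refine (hone'.iterate (a' := j * (D * ⌈p * (n : ℝ) ^ t⌉₊)) ?_).mono
          (le_of_eq (by ring)) le_rfl (fun _ h => h)
        intro C hC
        refine (ih (A ∩ C) (Finset.inter_subset_left.trans hAt) ?_).mono le_rfl le_rfl ?_
        · have : ((A ∩ C).card : ℝ) ≤ C.card := by
            exact_mod_cast Finset.card_le_card Finset.inter_subset_right
          push_cast at hA
          linarith
        · rintro I ⟨⟨h1, h2⟩, h3⟩
          exact ⟨h1, Finset.subset_inter h2 h3⟩
  refine (main ⌈1 / δ'⌉₊ _ subset_rfl ?_).mono (le_of_eq (by ring)) le_rfl (fun _ h => h)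
  rw [Finset.card_powersetCard, Finset.card_fin]
  have h1 : (n.choose t : ℝ) ≤ (n : ℝ) ^ t := by exact_mod_cast Nat.choose_le_pow n t
  have h2 : 1 ≤ (⌈1 / δ'⌉₊ : ℝ) * δ' := by
    rw [← div_le_iff₀ hδ']; exact Nat.le_ceil _
  have h3 : (n : ℝ) ^ t ≤ ⌈1 / δ'⌉₊ * (δ' * (n : ℝ) ^ t) := by nlinarith
  have h4 : (0 : ℝ) ≤ exTuran t n H := by positivity
  have h5 : 0 < δ * (n : ℝ) ^ t := by positivity
  linarith

theorem scheme_count {V : Type} [Fintype V] {a b : ℕ} {Ind : Finset V → Prop}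
    (h : HasScheme a (b : ℝ) Ind) (A : Finset V) (m : ℕ) (F : Finset (Finset V))
    (hF : ∀ I ∈ F, Ind I ∧ I ⊆ A ∧ I.card = m) :
    F.card ≤ ∑ s ∈ Finset.range (a + 1), A.card.choose s * b.choose (m - s) := by
  obtain ⟨T, C, h1, h2, h3, h4, h5⟩ := h
  have hsub : F ⊆ (Finset.range (a + 1)).biUnion fun s => (A.powersetCard s).biUnion fun S =>
      ((C S).powersetCard (m - s)).image fun R => S ∪ R := by
    intro I hI
    obtain ⟨hInd, hIA, hIm⟩ := hF I hI
    simp only [Finset.mem_biUnion, Finset.mem_range, Finset.mem_powersetCard, Finset.mem_image]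
    refine ⟨(T I).card, by have := h3 I; omega, T I, ⟨(h1 I).trans hIA, rfl⟩, I \ T I,
      ⟨?_, ?_⟩, Finset.union_sdiff_of_subset (h1 I)⟩
    · rw [(h2 I (T I) subset_rfl (h1 I)).2]
      exact Finset.sdiff_subset.trans (h4 I hInd)
    · rw [Finset.card_sdiff_of_subset (h1 I), hIm]
  refine (Finset.card_le_card hsub).trans (Finset.card_biUnion_le.trans ?_)
  refine Finset.sum_le_sum fun s _ => ?_
  refine Finset.card_biUnion_le.trans ?_
  rw [← Finset.card_powersetCard, ← smul_eq_mul]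
  refine Finset.sum_le_card_nsmul _ _ _ fun S _ => ?_
  refine Finset.card_image_le.trans ?_
  rw [Finset.card_powersetCard]
  exact Nat.choose_le_choose _ (by exact_mod_cast h5 S)

theorem choose_sub_mul (b b' m s : ℕ) (hs : s ≤ m) (hb : m + b' ≤ b) :
    b.choose (m - s) * b' ^ s ≤ b.choose m * m ^ s := by
  induction s with
  | zero => simp
  | succ s ih =>
    have ih := ih (by omega)
    have e := Nat.choose_succ_right_eq b (m - (s + 1))
    have e1 : m - (s + 1) + 1 = m - s := by omega
    rw [e1] at e
    calc b.choose (m - (s + 1)) * b' ^ (s + 1)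
        = b.choose (m - (s + 1)) * b' * b' ^ s := by ring
      _ ≤ b.choose (m - (s + 1)) * (b - (m - (s + 1))) * b' ^ s := by
        gcongr; omega
      _ = b.choose (m - s) * (m - s) * b' ^ s := by rw [e]
      _ = (b.choose (m - s) * b' ^ s) * (m - s) := by ring
      _ ≤ (b.choose m * m ^ s) * m := by gcongr; omega
      _ = _ := by ring

theorem choose_scale (b M m : ℕ) (hb : b ≤ M) :
    b.choose m * M ^ m ≤ M.choose m * b ^ m := by
  induction m with
  | zero => simp
  | succ m ih =>
    have e1 := Nat.choose_succ_right_eq b m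
    have e2 := Nat.choose_succ_right_eq M m
    have h : (b - m) * M ≤ (M - m) * b := by
      rcases le_total b m with h | h
      · simp [Nat.sub_eq_zero_of_le h]
      · obtain ⟨c, rfl⟩ := Nat.exists_eq_add_of_le h
        obtain ⟨d, rfl⟩ := Nat.exists_eq_add_of_le hb
        have : m + c + d - m = c + d := by omega
        rw [this, Nat.add_sub_cancel_left]
        nlinarith [Nat.zero_le (m * d)]
    refine Nat.le_of_mul_le_mul_right ?_ (show 0 < m + 1 by omega)
    calc b.choose (m + 1) * M ^ (m + 1) * (m + 1)
        = (b.choose (m + 1) * (m + 1)) * M ^ m * M := by ring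
      _ = (b.choose m * M ^ m) * ((b - m) * M) := by rw [e1]; ring
      _ ≤ (M.choose m * b ^ m) * ((M - m) * b) := by gcongr
      _ = (M.choose m * (M - m)) * b ^ (m + 1) := by ring
      _ = (M.choose (m + 1) * (m + 1)) * b ^ (m + 1) := by rw [e2]
      _ = _ := by ring

theorem sum_bound (N0 b b' M m a : ℕ) (K η B : ℝ) (hη : 0 < η) (hB : 1 ≤ B) (hK : 0 ≤ K)
    (hBK : K ≤ B * η) (ham : a ≤ m) (hmb : m + b' ≤ b) (hN : (N0 : ℝ) ≤ K * b')
    (ha : (a : ℝ) * Real.log B ≤ η * m) (hM : Real.exp (2 * η) * b ≤ M) (hb0 : 0 < b) :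
    ∑ s ∈ Finset.range (a + 1), N0.choose s * b.choose (m - s) ≤ M.choose m := by
  have hbR : (0 : ℝ) < b := by exact_mod_cast hb0
  have term : ∀ s ∈ Finset.range (a + 1), (N0.choose s : ℝ) * b.choose (m - s) ≤
      (b.choose m * B ^ a) * ((η * m) ^ s / s.factorial) := by
    intro s hs
    have hsa : s ≤ a := by simpa [Nat.lt_succ_iff] using hs
    have h1 : (N0.choose s : ℝ) ≤ (N0 : ℝ) ^ s / s.factorial := Nat.choose_le_pow_div s N0
    have h2 : (b.choose (m - s) : ℝ) * (b' : ℝ) ^ s ≤ b.choose m * (m : ℝ) ^ s := by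
      exact_mod_cast choose_sub_mul b b' m s (hsa.trans ham) hmb
    calc (N0.choose s : ℝ) * b.choose (m - s)
        ≤ ((K * b') ^ s / s.factorial) * b.choose (m - s) := by
          gcongr; refine h1.trans ?_; gcongr
      _ = (K ^ s / s.factorial) * (b.choose (m - s) * (b' : ℝ) ^ s) := by rw [mul_pow]; ring
      _ ≤ (K ^ s / s.factorial) * (b.choose m * (m : ℝ) ^ s) := by gcongr
      _ ≤ ((B * η) ^ s / s.factorial) * (b.choose m * (m : ℝ) ^ s) := by gcongr
      _ = (b.choose m * B ^ s) * ((η * m) ^ s / s.factorial) := by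
          rw [mul_pow, mul_pow]; ring
      _ ≤ _ := by gcongr
  have hsum : (∑ s ∈ Finset.range (a + 1), (N0.choose s : ℝ) * b.choose (m - s)) ≤
      (b.choose m * B ^ a) * Real.exp (η * m) := by
    refine (Finset.sum_le_sum term).trans ?_
    rw [← Finset.mul_sum]
    gcongr
    exact Real.sum_le_exp_of_nonneg (by positivity) _
  have hBa : B ^ a ≤ Real.exp (η * m) := by
    have : B ^ a = Real.exp (a * Real.log B) := by
      rw [Real.exp_nat_mul, Real.exp_log (by linarith)]
    rw [this]; exact Real.exp_le_exp.mpr ha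
  have hexp : Real.exp (η * m) * Real.exp (η * m) = Real.exp (2 * η) ^ m := by
    rw [← Real.exp_add, ← Real.exp_nat_mul]; congr 1; ring
  have h3 : (b.choose m : ℝ) * Real.exp (2 * η) ^ m ≤ M.choose m := by
    have hbM : b ≤ M := by
      have : (1 : ℝ) ≤ Real.exp (2 * η) := Real.one_le_exp (by positivity)
      have : (b : ℝ) ≤ M := by nlinarith
      exact_mod_cast this
    have h4 : (b.choose m : ℝ) * (M : ℝ) ^ m ≤ M.choose m * (b : ℝ) ^ m := by
      exact_mod_cast choose_scale b M m hbM
    refine le_of_mul_le_mul_right ?_ (pow_pos hbR m)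
    refine le_trans ?_ h4
    rw [mul_assoc, ← mul_pow]
    gcongr
  have : (∑ s ∈ Finset.range (a + 1), (N0.choose s : ℝ) * b.choose (m - s)) ≤ M.choose m := by
    refine hsum.trans (le_trans ?_ h3)
    rw [mul_assoc, ← hexp]
    gcongr
  exact_mod_cast this

theorem upper_of_lt {α : Type} {t n m : ℕ} {H : Finset (Finset α)} (X : ℕ)
    (h : m = 0 ∨ exTuran t n H < m) :
    ((((Finset.univ : Finset (Fin n)).powersetCard t).powersetCard m).filter
          (fun G : Finset (Finset (Fin n)) => ¬ HContains H G)).card ≤ X.choose m := by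
  rcases h with rfl | h
  · refine (Finset.card_filter_le _ _).trans ?_
    simp
  · rw [Finset.card_eq_zero.mpr]
    · exact Nat.zero_le _
    · rw [Finset.filter_eq_empty_iff]
      intro G hG hf
      rw [Finset.mem_powersetCard] at hG
      have := le_ex (H := H) (fun E hE => (Finset.mem_powersetCard.mp (hG.1 hE)).2) hf
      omega

theorem lower {α : Type} {t n m : ℕ} {H : Finset (Finset α)} (he : 1 ≤ H.card) :
    Nat.choose (exTuran t n H) m ≤
      ((((Finset.univ : Finset (Fin n)).powersetCard t).powersetCard m).filter
          (fun G : Finset (Finset (Fin n)) => ¬ HContains H G)).card := by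
  obtain ⟨G, hG, hf, hc⟩ := ex_attained t n he
  rw [← hc, ← Finset.card_powersetCard]
  refine Finset.card_le_card fun I hI => ?_
  rw [Finset.mem_powersetCard] at hI
  rw [Finset.mem_filter, Finset.mem_powersetCard]
  refine ⟨⟨fun E hE => ?_, hI.2⟩, fun h => hf (hcontains_mono h hI.1)⟩
  rw [Finset.mem_powersetCard]
  exact ⟨Finset.subset_univ _, hG E (hI.1 hE)⟩

theorem ex_le_pow {α : Type} (t n : ℕ) {H : Finset (Finset α)} (he : 1 ≤ H.card) :
    exTuran t n H ≤ n ^ t :=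
  (ex_le_choose t n he).trans (Nat.choose_le_pow n t)

theorem upper {α : Type} [Fintype α] {t : ℕ} (ht : 2 ≤ t)
    {H : Finset (Finset α)} (hHuni : ∀ E ∈ H, E.card = t)
    (hv : t + 1 ≤ Fintype.card α) (he : 1 ≤ H.card)
    {δ : ℝ} (hδ : 0 < δ) :
    ∃ C : ℝ, 0 < C ∧ ∀ n : ℕ, ∀ m : ℕ,
      C * (n : ℝ) ^ ((t : ℝ) - 1 / tDensity t H) ≤ (m : ℝ) →
      ((((Finset.univ : Finset (Fin n)).powersetCard t).powersetCard m).filter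
          (fun G : Finset (Finset (Fin n)) => ¬ HContains H G)).card ≤
        Nat.choose (exTuran t n H + ⌈δ * (n : ℝ) ^ t⌉₊) m := by
  have zero_case : ∀ m : ℕ, m = 0 ∨ exTuran t 0 H < m := by
    intro m
    have := ex_le_pow t 0 he
    rw [zero_pow (by omega)] at this
    omega
  rcases Nat.lt_or_ge H.card 2 with h1 | h2
  · refine ⟨2, by norm_num, fun n m hm => upper_of_lt _ ?_⟩
    rw [tDensity_one hv (by omega)] at hm
    rcases Nat.eq_zero_or_pos n with rfl | hn
    · exact zero_case m
    · right
      rw [div_zero, sub_zero, Real.rpow_natCast] at hm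
      have h3 : 2 * n ^ t ≤ m := by exact_mod_cast hm
      have := ex_le_pow t n he
      have := Nat.pow_pos hn (n := t)
      omega
  · obtain ⟨D, n0, hcont⟩ := containers ht hHuni hv h2 (half_pos hδ)
    have hμ := tDensity_ge hHuni h2 (by omega)
    have htR : (0 : ℝ) < t := by positivity
    have hexp : 0 ≤ (t : ℝ) - 1 / tDensity t H := by
      have : 1 / tDensity t H ≤ t := by
        rw [one_div_le (lt_of_lt_of_le (by positivity) hμ) htR]; exact hμ
      linarith
    set γ : ℝ := δ / (4 * (2 + δ)) with hγ
    have hγ0 : 0 < γ := by positivity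
    set η : ℝ := Real.log (1 + γ) / 2 with hηd
    have hη : 0 < η := by
      have := Real.log_pos (show 1 < 1 + γ by linarith)
      positivity
    set B : ℝ := max 1 (2 / δ / η) with hBd
    have hB1 : 1 ≤ B := le_max_left _ _
    have hBK : 2 / δ ≤ B * η := by
      rw [← div_le_iff₀ hη]; exact le_max_right _ _
    have hlogB : 0 ≤ Real.log B := Real.log_nonneg hB1
    set N1 : ℕ := max n0 (⌈4 / δ⌉₊ + 1) with hN1
    refine ⟨(N1 : ℝ) ^ t + 1 + 2 * D + 2 * D * Real.log B / η, by positivity,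
      fun n m hm => ?_⟩
    set C : ℝ := (N1 : ℝ) ^ t + 1 + 2 * D + 2 * D * Real.log B / η with hC
    have hC1 : (N1 : ℝ) ^ t + 1 ≤ C := by
      have : 0 ≤ 2 * D * Real.log B / η := by positivity
      rw [hC]; linarith [Nat.cast_nonneg (α := ℝ) D]
    have hC2 : 2 * (D : ℝ) ≤ C := by
      have : 0 ≤ 2 * D * Real.log B / η := by positivity
      have : 0 ≤ (N1 : ℝ) ^ t := by positivity
      rw [hC]; linarith
    have hC3 : 2 * (D : ℝ) * Real.log B ≤ η * C := by
      have h3 : 2 * D * Real.log B / η ≤ C := by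
        have : 0 ≤ (N1 : ℝ) ^ t := by positivity
        rw [hC]; linarith [Nat.cast_nonneg (α := ℝ) D]
      rw [div_le_iff₀ hη] at h3
      linarith
    rcases Nat.eq_zero_or_pos n with rfl | hn
    · exact upper_of_lt _ (zero_case m)
    have hnR : (1 : ℝ) ≤ n := by exact_mod_cast hn
    set x : ℝ := (n : ℝ) ^ ((t : ℝ) - 1 / tDensity t H) with hx
    have hx1 : 1 ≤ x := Real.one_le_rpow hnR hexp
    rcases Nat.lt_or_ge (exTuran t n H) m with hlt | hme
    · exact upper_of_lt _ (Or.inr hlt)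
    have hexn := ex_le_pow t n he
    rcases Nat.lt_or_ge n N1 with hn1 | hn1
    · exfalso
      have h3 : (m : ℝ) ≤ (n : ℝ) ^ t := by exact_mod_cast hme.trans hexn
      have h4 : (n : ℝ) ^ t ≤ (N1 : ℝ) ^ t := by gcongr
      nlinarith
    have hsch := hcont n ((le_max_left _ _).trans hn1)
    rw [← hx] at hsch
    set b' : ℕ := ⌈δ / 2 * (n : ℝ) ^ t⌉₊ with hb'
    have hb'1 : δ / 2 * (n : ℝ) ^ t ≤ b' := Nat.le_ceil _
    have hb'2 : (b' : ℝ) < δ / 2 * (n : ℝ) ^ t + 1 := Nat.ceil_lt_add_one (by positivity)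
    have hnt : 1 ≤ δ / 4 * (n : ℝ) ^ t := by
      have h3 : (n : ℝ) ≤ (n : ℝ) ^ t := le_self_pow₀ hnR (by omega)
      have h4 : 4 / δ ≤ n := by
        refine (Nat.le_ceil _).trans ?_
        have : ⌈4 / δ⌉₊ + 1 ≤ n := (le_max_right _ _).trans hn1
        exact_mod_cast (Nat.le_succ _).trans this
      rw [div_le_iff₀ hδ] at h4
      nlinarith
    have hpos : 0 < (n : ℝ) ^ t := by positivity
    have hsch2 : HasScheme (V := Finset (Fin n)) (D * ⌈x⌉₊) ((exTuran t n H + b' : ℕ) : ℝ)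
        (fun I => ¬ HContains H I ∧ I ⊆ (Finset.univ : Finset (Fin n)).powersetCard t) :=
      hsch.mono le_rfl (by push_cast; linarith) fun _ h => h
    have hceil : ((D * ⌈x⌉₊ : ℕ) : ℝ) ≤ 2 * D * x := by
      have : (⌈x⌉₊ : ℝ) < x + 1 := Nat.ceil_lt_add_one (by linarith)
      push_cast
      nlinarith [Nat.cast_nonneg (α := ℝ) D]
    have hcnt := scheme_count hsch2 ((Finset.univ : Finset (Fin n)).powersetCard t) m
      ((((Finset.univ : Finset (Fin n)).powersetCard t).powersetCard m).filter
          (fun G : Finset (Finset (Fin n)) => ¬ HContains H G)) (by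
        intro I hI
        rw [Finset.mem_filter, Finset.mem_powersetCard] at hI
        exact ⟨⟨hI.2, hI.1.1⟩, hI.1⟩)
    refine hcnt.trans ?_
    have hexR : (exTuran t n H : ℝ) ≤ (n : ℝ) ^ t := by exact_mod_cast hexn
    refine sum_bound _ _ b' _ _ _ (2 / δ) η B hη hB1 (by positivity) hBK ?_ (by omega) ?_ ?_ ?_ ?_
    · have : ((D * ⌈x⌉₊ : ℕ) : ℝ) ≤ m := by nlinarith
      exact_mod_cast this
    · rw [Finset.card_powersetCard, Finset.card_univ, Fintype.card_fin]
      have h3 : (n.choose t : ℝ) ≤ (n : ℝ) ^ t := by exact_mod_cast Nat.choose_le_pow n t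
      refine h3.trans ?_
      rw [div_mul_eq_mul_div, le_div_iff₀ hδ]
      linarith
    · calc ((D * ⌈x⌉₊ : ℕ) : ℝ) * Real.log B ≤ 2 * D * x * Real.log B := by gcongr
        _ = (2 * D * Real.log B) * x := by ring
        _ ≤ (η * C) * x := by gcongr
        _ = η * (C * x) := by ring
        _ ≤ η * m := by gcongr
    · have h3 : Real.exp (2 * η) = 1 + γ := by
        rw [hηd, mul_div_cancel₀ _ (by norm_num : (2 : ℝ) ≠ 0), Real.exp_log (by linarith)]
      rw [h3]
      have h4 : δ * (n : ℝ) ^ t ≤ ⌈δ * (n : ℝ) ^ t⌉₊ := Nat.le_ceil _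
      push_cast
      have h5 : γ * (exTuran t n H + b') ≤ δ / 4 * (n : ℝ) ^ t := by
        calc γ * (exTuran t n H + b') ≤ γ * ((2 + δ) * (n : ℝ) ^ t) := by
              gcongr; nlinarith
          _ = _ := by rw [hγ]; field_simp
      linarith
    · have : 0 < b' := Nat.ceil_pos.mpr (by positivity)
      omega

end HC

/-- Theorem 7.1: the number of `H`-free `t`-uniform hypergraphs on `{1, …, n}`
with exactly `m` edges. -/
theorem count_Hfree_hypergraphs {α : Type} [Fintype α] [DecidableEq α]
    (t : ℕ) (ht : 2 ≤ t)
    (H : Finset (Finset α)) (hHuni : ∀ E ∈ H, E.card = t)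
    (hv : t + 1 ≤ Fintype.card α) (he : 1 ≤ H.card)
    (δ : ℝ) (hδ : 0 < δ) :
    ∃ C : ℝ, 0 < C ∧ ∀ n : ℕ, ∀ m : ℕ,
      C * (n : ℝ) ^ ((t : ℝ) - 1 / tDensity t H) ≤ (m : ℝ) →
      Nat.choose (exTuran t n H) m ≤
        ((((Finset.univ : Finset (Fin n)).powersetCard t).powersetCard m).filter
          (fun G : Finset (Finset (Fin n)) => ¬ HContains H G)).card ∧
      ((((Finset.univ : Finset (Fin n)).powersetCard t).powersetCard m).filter
          (fun G : Finset (Finset (Fin n)) => ¬ HContains H G)).card ≤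
        Nat.choose (exTuran t n H + ⌈δ * (n : ℝ) ^ t⌉₊) m := by
  obtain ⟨C, hC, h⟩ := HC.upper ht hHuni hv he hδ
  exact ⟨C, hC, fun n m hm => ⟨HC.lower he, h n m hm⟩⟩
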